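/- Let n ≥ 1. There exist constants ε₀ > 0 and C > 0, depending only on n, with the following property: if K is a smooth, strictly convex body in ℝ^{n+1} with positive support function h containing the origin in its interior, and 1 − ε ≤ h(x)·det(A(x)+x⊗x) ≤ 1 + ε for all x ∈ S^n for some ε ∈ (0, ε₀) (i.e. 1−ε ≤ h/𝒦 ≤ 1+ε), then h(x) ≤ C for all x ∈ S^n. -/

import Mathlib

open MeasureTheory Metric Real
open scoped InnerProductSpace ENNReal Topology

noncomputable section

/-- Euclidean space `ℝ^{n+1}`. -/
abbrev Eu (n : ℕ) : Type := EuclideanSpace ℝ (Fin (n + 1))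

/-- The unit sphere `S^n ⊆ ℝ^{n+1}` as a subtype. -/
abbrev Sph (n : ℕ) : Type := Metric.sphere (0 : Eu n) 1

/-- The spherical Lebesgue (surface) measure on `S^n`. -/
def sphMeas (n : ℕ) : Measure (Sph n) := (volume : Measure (Eu n)).toSphere

/-- The support function of a set `K ⊆ ℝ^{n+1}`. -/
def sfn {n : ℕ} (K : Set (Eu n)) (z : Eu n) : ℝ :=
  sSup ((fun y => ⟪z, y⟫_ℝ) '' K)

/-- The Hessian endomorphism `A(x) = D(∇ h_K)(x)`. -/
def hessA {n : ℕ} (K : Set (Eu n)) (x : Eu n) : Eu n →L[ℝ] Eu n :=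
  fderiv ℝ (gradient (sfn K)) x

/-- The rank-one endomorphism `x ⊗ x : v ↦ ⟨v, x⟩ x`. -/
def tens {n : ℕ} (x : Eu n) : Eu n →L[ℝ] Eu n :=
  (innerSL ℝ x).smulRight x

/-- `det (A(x) + x ⊗ x)`, the reciprocal Gauss curvature `1/𝒦` at `x ∈ S^n`. -/
def rK {n : ℕ} (K : Set (Eu n)) (x : Eu n) : ℝ :=
  LinearMap.det ((hessA K x + tens x : Eu n →L[ℝ] Eu n) : Eu n →ₗ[ℝ] Eu n)

/-- `K` is a smooth, strictly convex body with positive support function. -/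
structure IsSmoothConvexBody {n : ℕ} (K : Set (Eu n)) : Prop where
  compact : IsCompact K
  convex : Convex ℝ K
  interior_nonempty : (interior K).Nonempty
  pos : ∀ x : Sph n, 0 < sfn K x
  smooth : ContDiffOn ℝ (⊤ : ℕ∞) (sfn K) {(0 : Eu n)}ᶜ
  posdef : ∀ x : Sph n, ∀ v : Eu n, v ≠ 0 →
    0 < ⟪(hessA K (x : Eu n) + tens (x : Eu n)) v, v⟫_ℝ

/-- The density `h·det(A + x⊗x)` of the measure `dV` with respect to `dθ`. -/
def dens {n : ℕ} (K : Set (Eu n)) (x : Eu n) : ℝ := sfn K x * rK K x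

/-- The centroid-type point `c(K) = (∫ ∇h_K dV)/(∫ dV)`. -/
def cK {n : ℕ} (K : Set (Eu n)) : Eu n :=
  (∫ x : Sph n, dens K x ∂sphMeas n)⁻¹ •
    ∫ x : Sph n, dens K x • gradient (sfn K) x ∂sphMeas n

/-- The support function of the translated body `K - c(K)`. -/
def tsfn {n : ℕ} (K : Set (Eu n)) (x : Eu n) : ℝ := sfn K x - ⟪x, cK K⟫_ℝ

/-!
Minkowski's first inequality in logarithmic form, a consequence of the Prékopa–Leindler inequality,
is applied to `K` and its images under the projective maps `y ↦ (1 - t * (⟪e, y⟫ - c))⁻¹ • y`.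
Expanded to second order in `t`, it gives the spectral inequality
`n * ∫ ‖X - c‖² dV ≤ ∫ h * tr A dV`, where `X = ∇h`, `dV = h / 𝒦 dθ` and `c = cK K`. The divergence
theorem on the sphere gives `∫ (h * tr A + ‖X - c‖²) dθ = (n + 1) * ∫ (h - ⟪·, c⟫)² dθ`. When
`dV` is close to `dθ`, the two relations force `∫ (‖X - c‖² - (h - ⟪·, c⟫)²) dθ ≤ 8 ε R² |S^n|`,
with `R` the largest norm on `K`: the tangential part of `X - c` is small near every point of the
sphere, so the support function `F = h - ⟪·, c⟫` of `K - c` satisfies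
`F y ≥ F z * ⟪z, y⟫ - R / 32`. As `F` is at least `R / 2` somewhere, it is at least `R / 32`
everywhere, and the volume of `K` bounds `R`.
-/

section

open scoped Pointwise Gradient
open Filter

/-! ### The Prékopa–Leindler inequality -/

lemma volume_add_volume_le_volume_add_of_isCompact {A B : Set ℝ} (hA : IsCompact A)
    (hB : IsCompact B) (hA0 : A.Nonempty) (hB0 : B.Nonempty) :
    volume A + volume B ≤ volume (A + B) := by
  obtain ⟨a, ha, hamax⟩ := hA.exists_isMaxOn hA0 continuousOn_id
  obtain ⟨b, hb, hbmin⟩ := hB.exists_isMinOn hB0 continuousOn_id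
  have hm : MeasurableSet (a +ᵥ B) := (hB.vadd a).measurableSet
  have hd : AEDisjoint volume (b +ᵥ A) (a +ᵥ B) := by
    refine measure_mono_null (t := {a + b}) ?_ (by simp)
    rintro _ ⟨⟨x, hx, rfl⟩, ⟨y, hy, hxy⟩⟩
    have hxa : x ≤ a := hamax hx
    have hby : b ≤ y := hbmin hy
    simp only [vadd_eq_add, Set.mem_singleton_iff] at hxy ⊢
    linarith
  calc volume A + volume B = volume (b +ᵥ A) + volume (a +ᵥ B) := by
        rw [measure_vadd, measure_vadd]
    _ = volume ((b +ᵥ A) ∪ (a +ᵥ B)) := (measure_union₀ hm.nullMeasurableSet hd).symm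
    _ ≤ volume (A + B) := by
        refine measure_mono (Set.union_subset ?_ (Set.vadd_set_subset_add ha))
        rw [add_comm]
        exact Set.vadd_set_subset_add hb

lemma volume_add_volume_le_volume_add {A B : Set ℝ} (hA : MeasurableSet A)
    (hB : MeasurableSet B) (hA0 : A.Nonempty) (hB0 : B.Nonempty) :
    volume A + volume B ≤ volume (A + B) := by
  rcases eq_or_ne (volume A) 0 with hA' | hA'
  · obtain ⟨a, ha⟩ := hA0
    rw [hA', zero_add, ← measure_vadd volume a B]
    exact measure_mono (Set.vadd_set_subset_add ha)
  rcases eq_or_ne (volume B) 0 with hB' | hB'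
  · obtain ⟨b, hb⟩ := hB0
    rw [hB', add_zero, ← measure_vadd volume b A, add_comm]
    exact measure_mono (Set.vadd_set_subset_add hb)
  refine le_of_forall_lt fun r hr => ?_
  obtain ⟨r₁, hr₁, r₂, hr₂, hr⟩ := ENNReal.exists_lt_add_of_lt_add hr hA' hB'
  obtain ⟨K₁, hK₁A, hK₁, hr₁⟩ := hA.exists_lt_isCompact hr₁
  obtain ⟨K₂, hK₂B, hK₂, hr₂⟩ := hB.exists_lt_isCompact hr₂
  calc r < r₁ + r₂ := hr
    _ ≤ volume K₁ + volume K₂ := add_le_add hr₁.le hr₂.le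
    _ ≤ volume (K₁ + K₂) := volume_add_volume_le_volume_add_of_isCompact hK₁ hK₂
        (nonempty_of_measure_ne_zero (pos_of_gt hr₁).ne')
        (nonempty_of_measure_ne_zero (pos_of_gt hr₂).ne')
    _ ≤ volume (A + B) := measure_mono (Set.add_subset_add hK₁A hK₂B)

/-- The Prékopa–Leindler inequality for a measure `μ` on a real vector space, with weights
`a + b = 1`. -/
def PrekopaLeindler {E : Type*} [MeasurableSpace E] [AddCommGroup E] [Module ℝ E]
    (μ : Measure E) : Prop :=
  ∀ ⦃a b : ℝ⦄, 0 < a → 0 < b → a + b = 1 → ∀ ⦃f g h : E → ℝ≥0∞⦄,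
    Measurable f → Measurable g → Measurable h →
    (∀ x y, f x ^ a * g y ^ b ≤ h (a • x + b • y)) →
    (∫⁻ x, f x ∂μ) ^ a * (∫⁻ x, g x ∂μ) ^ b ≤ ∫⁻ x, h x ∂μ

lemma lintegral_eq_lintegral_meas_ofReal_lt {α : Type*} [MeasurableSpace α] {μ : Measure α}
    {f : α → ℝ≥0∞} (hf : Measurable f) (hf' : ∀ x, f x ≠ ∞) :
    ∫⁻ x, f x ∂μ = ∫⁻ t in Set.Ioi (0 : ℝ), μ {x | ENNReal.ofReal t < f x} := by
  calc ∫⁻ x, f x ∂μ = ∫⁻ x, ENNReal.ofReal (f x).toReal ∂μ := by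
        simp only [ENNReal.ofReal_toReal (hf' _)]
    _ = ∫⁻ t in Set.Ioi (0 : ℝ), μ {x | t < (f x).toReal} :=
        lintegral_eq_lintegral_meas_lt μ (.of_forall fun _ => ENNReal.toReal_nonneg)
          hf.ennreal_toReal.aemeasurable
    _ = _ := setLIntegral_congr_fun measurableSet_Ioi fun t ht => by
        simp only [ENNReal.ofReal_lt_iff_lt_toReal (le_of_lt ht) (hf' _)]

lemma rpow_mul_rpow_le_ofReal_mul_add {a b : ℝ} (ha : 0 < a) (hb : 0 < b) (hab : a + b = 1)
    (u v : ℝ≥0∞) : u ^ a * v ^ b ≤ ENNReal.ofReal a * u + ENNReal.ofReal b * v := by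
  have hconj : a⁻¹.HolderConjugate b⁻¹ := ⟨by simpa using hab, inv_pos.2 ha, inv_pos.2 hb⟩
  have young := ENNReal.young_inequality (u ^ a) (v ^ b) hconj
  rwa [ENNReal.rpow_rpow_inv ha.ne', ENNReal.rpow_rpow_inv hb.ne', ENNReal.ofReal_inv_of_pos ha,
    ENNReal.ofReal_inv_of_pos hb, div_eq_mul_inv, div_eq_mul_inv, inv_inv, inv_inv,
    mul_comm u, mul_comm v] at young

lemma lintegral_add_le_of_iSup_eq_one {a b : ℝ} (ha : 0 < a) (hb : 0 < b) (hab : a + b = 1)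
    {f g h : ℝ → ℝ≥0∞} (hf : Measurable f) (hg : Measurable g) (hh : Measurable h)
    (hf1 : ⨆ x, f x = 1) (hg1 : ⨆ x, g x = 1)
    (H : ∀ x y, f x ^ a * g y ^ b ≤ h (a • x + b • y)) :
    ENNReal.ofReal a * (∫⁻ x, f x) + ENNReal.ofReal b * (∫⁻ x, g x) ≤ ∫⁻ x, h x := by
  have le_one : ∀ {u : ℝ → ℝ≥0∞}, ⨆ x, u x = 1 → ∀ x, u x ≤ 1 := fun hu x => hu ▸ le_iSup _ x
  have layer_cake : ∀ {u : ℝ → ℝ≥0∞}, Measurable u → (∀ x, u x ≤ 1) →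
      ∫⁻ x, u x = ∫⁻ t in Set.Ioi (0 : ℝ), volume {x | ENNReal.ofReal t < u x} := fun hu hu1 =>
    lintegral_eq_lintegral_meas_ofReal_lt hu fun x => ne_top_of_le_ne_top ENNReal.one_ne_top (hu1 x)
  have measurable_dist : ∀ u : ℝ → ℝ≥0∞,
      Measurable fun t : ℝ => volume {x | ENNReal.ofReal t < u x} := fun u =>
    Antitone.measurable fun s t hst =>
      measure_mono fun x hx => (ENNReal.ofReal_le_ofReal hst).trans_lt hx
  have volume_smul : ∀ {c : ℝ}, 0 < c → ∀ A : Set ℝ,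
      ENNReal.ofReal c * volume A = volume (c • A) := fun hc A => by
    rw [Measure.addHaar_smul, Module.finrank_self, pow_one, abs_of_pos hc]
  refine le_trans ?_ (lintegral_mono fun x => min_le_left (h x) 1)
  rw [layer_cake hf (le_one hf1), layer_cake hg (le_one hg1),
    layer_cake (hh.min measurable_const) fun x => min_le_right _ _,
    ← lintegral_const_mul _ (measurable_dist f), ← lintegral_const_mul _ (measurable_dist g),
    ← lintegral_add_left ((measurable_dist f).const_mul _)]
  refine setLIntegral_mono' measurableSet_Ioi fun t _ => ?_
  rcases le_or_gt 1 (ENNReal.ofReal t) with ht1 | ht1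
  · have empty : ∀ {u : ℝ → ℝ≥0∞}, (∀ x, u x ≤ 1) → {x | ENNReal.ofReal t < u x} = ∅ := fun hu =>
      Set.eq_empty_of_forall_notMem fun x hx => (ht1.trans_lt hx).not_ge (hu x)
    simp [empty (le_one hf1), empty (le_one hg1)]
  rw [volume_smul ha, volume_smul hb]
  refine (volume_add_volume_le_volume_add
    ((measurableSet_lt measurable_const hf).const_smul_of_ne_zero ha.ne')
    ((measurableSet_lt measurable_const hg).const_smul_of_ne_zero hb.ne')
    (Set.Nonempty.smul_set (lt_iSup_iff.1 (ht1.trans_eq hf1.symm)))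
    (Set.Nonempty.smul_set (lt_iSup_iff.1 (ht1.trans_eq hg1.symm)))).trans
    (measure_mono ?_)
  rintro _ ⟨_, ⟨x, hx, rfl⟩, _, ⟨y, hy, rfl⟩, rfl⟩
  refine lt_min ?_ ht1
  calc ENNReal.ofReal t = ENNReal.ofReal t ^ a * ENNReal.ofReal t ^ b := by
        rw [← ENNReal.rpow_add_of_nonneg _ _ ha.le hb.le, hab, ENNReal.rpow_one]
    _ < f x ^ a * g y ^ b :=
        ENNReal.mul_lt_mul (ENNReal.rpow_lt_rpow hx ha) (ENNReal.rpow_lt_rpow hy hb)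
    _ ≤ h (a • x + b • y) := H x y

lemma lintegral_rpow_mul_le_of_bounded {a b : ℝ} (ha : 0 < a) (hb : 0 < b) (hab : a + b = 1)
    {f g h : ℝ → ℝ≥0∞} (hf : Measurable f) (hg : Measurable g) (hh : Measurable h)
    (hf' : ⨆ x, f x ≠ ∞) (hg' : ⨆ x, g x ≠ ∞)
    (H : ∀ x y, f x ^ a * g y ^ b ≤ h (a • x + b • y)) :
    (∫⁻ x, f x) ^ a * (∫⁻ x, g x) ^ b ≤ ∫⁻ x, h x := by
  set M := ⨆ x, f x with hM
  set N := ⨆ x, g x with hN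
  rcases eq_or_ne M 0 with hM0 | hM0
  · simp [ENNReal.iSup_eq_zero.1 (hM.symm.trans hM0), ha]
  rcases eq_or_ne N 0 with hN0 | hN0
  · simp [ENNReal.iSup_eq_zero.1 (hN.symm.trans hN0), hb]
  have scale : ∀ u v : ℝ≥0∞,
      (M⁻¹ * u) ^ a * (N⁻¹ * v) ^ b = (M ^ a * N ^ b)⁻¹ * (u ^ a * v ^ b) := fun u v => by
    rw [ENNReal.mul_rpow_of_nonneg _ _ ha.le, ENNReal.mul_rpow_of_nonneg _ _ hb.le,
      ENNReal.inv_rpow, ENNReal.inv_rpow, ENNReal.mul_inv, mul_mul_mul_comm]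
    · exact .inr (ENNReal.rpow_ne_top_of_nonneg hb.le hg')
    · exact .inl (ENNReal.rpow_ne_top_of_nonneg ha.le hf')
  have normalised := lintegral_add_le_of_iSup_eq_one ha hb hab (hf.const_mul M⁻¹)
    (hg.const_mul N⁻¹) (hh.const_mul (M ^ a * N ^ b)⁻¹)
    (by rw [← ENNReal.mul_iSup, ENNReal.inv_mul_cancel hM0 hf'])
    (by rw [← ENNReal.mul_iSup, ENNReal.inv_mul_cancel hN0 hg'])
    fun x y => (scale _ _).trans_le (mul_le_mul_right (H x y) _)
  rw [lintegral_const_mul _ hf, lintegral_const_mul _ hg, lintegral_const_mul _ hh] at normalised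
  have scaled := (rpow_mul_rpow_le_ofReal_mul_add ha hb hab _ _).trans normalised
  rw [scale] at scaled
  refine (ENNReal.mul_le_mul_iff_right ?_ ?_).1 scaled
  · exact ENNReal.inv_ne_zero.2 (ENNReal.mul_ne_top (ENNReal.rpow_ne_top_of_nonneg ha.le hf')
      (ENNReal.rpow_ne_top_of_nonneg hb.le hg'))
  · exact ENNReal.inv_ne_top.2 (mul_ne_zero (ENNReal.rpow_pos hM0.bot_lt hf').ne'
      (ENNReal.rpow_pos hN0.bot_lt hg').ne')

lemma tendsto_lintegral_min_natCast {α : Type*} [MeasurableSpace α] {μ : Measure α}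
    {f : α → ℝ≥0∞} (hf : Measurable f) :
    Tendsto (fun k : ℕ => ∫⁻ x, min (f x) k ∂μ) atTop (𝓝 (∫⁻ x, f x ∂μ)) := by
  refine lintegral_tendsto_of_tendsto_of_monotone
    (fun k => (hf.min measurable_const).aemeasurable)
    (.of_forall fun x i j hij => min_le_min_left _ (by exact_mod_cast hij))
    (.of_forall fun x => ?_)
  simpa only [min_top_right] using
    (tendsto_const_nhds (x := f x)).min ENNReal.tendsto_nat_nhds_top

lemma prekopaLeindler_volume_real : PrekopaLeindler (volume : Measure ℝ) := by
  intro a b ha hb hab f g h hf hg hh H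
  rcases eq_or_ne (∫⁻ x, f x) 0 with hf0 | hf0
  · simp [hf0, ha]
  rcases eq_or_ne (∫⁻ x, g x) 0 with hg0 | hg0
  · simp [hg0, hb]
  refine le_of_tendsto' (ENNReal.Tendsto.mul ((tendsto_lintegral_min_natCast hf).ennrpow_const a) ?_
    ((tendsto_lintegral_min_natCast hg).ennrpow_const b) ?_) fun k =>
    lintegral_rpow_mul_le_of_bounded ha hb hab (hf.min measurable_const)
      (hg.min measurable_const) hh
      (ne_top_of_le_ne_top (ENNReal.natCast_ne_top k) (iSup_le fun x => min_le_right _ _))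
      (ne_top_of_le_ne_top (ENNReal.natCast_ne_top k) (iSup_le fun x => min_le_right _ _))
      fun x y => le_trans ?_ (H x y)
  · exact .inl (by simp [ENNReal.rpow_eq_zero_iff, hf0, ha.not_gt])
  · exact .inl (by simp [ENNReal.rpow_eq_zero_iff, hg0, hb.not_gt])
  · exact mul_le_mul' (ENNReal.rpow_le_rpow (min_le_left _ _) ha.le)
      (ENNReal.rpow_le_rpow (min_le_left _ _) hb.le)

namespace PrekopaLeindler

variable {E F : Type*} [MeasurableSpace E] [AddCommGroup E] [Module ℝ E]
  [MeasurableSpace F] [AddCommGroup F] [Module ℝ F] {μ : Measure E} {ν : Measure F}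

lemma prod [SFinite ν] (hμ : PrekopaLeindler μ) (hν : PrekopaLeindler ν) :
    PrekopaLeindler (μ.prod ν) := by
  intro a b ha hb hab f g h hf hg hh H
  rw [lintegral_prod _ hf.aemeasurable, lintegral_prod _ hg.aemeasurable,
    lintegral_prod _ hh.aemeasurable]
  exact hμ ha hb hab hf.lintegral_prod_right' hg.lintegral_prod_right' hh.lintegral_prod_right'
    fun x x' => hν ha hb hab (hf.comp measurable_prodMk_left) (hg.comp measurable_prodMk_left)
      (hh.comp measurable_prodMk_left) fun y y' => H (x, y) (x', y')

lemma of_measurePreserving (hμ : PrekopaLeindler μ) (L : E →ₗ[ℝ] F)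
    (hL : MeasurePreserving L μ ν) : PrekopaLeindler ν := by
  intro a b ha hb hab f g h hf hg hh H
  rw [← hL.lintegral_comp hf, ← hL.lintegral_comp hg, ← hL.lintegral_comp hh]
  exact hμ ha hb hab (hf.comp hL.measurable) (hg.comp hL.measurable) (hh.comp hL.measurable)
    fun x y => by simpa using H (L x) (L y)

lemma measure_rpow_mul_le (hμ : PrekopaLeindler μ) {a b : ℝ} (ha : 0 < a) (hb : 0 < b)
    (hab : a + b = 1) {A B C : Set E} (hA : MeasurableSet A) (hB : MeasurableSet B)
    (hC : MeasurableSet C) (hABC : a • A + b • B ⊆ C) : μ A ^ a * μ B ^ b ≤ μ C := by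
  rw [← lintegral_indicator_one hA, ← lintegral_indicator_one hB, ← lintegral_indicator_one hC]
  refine hμ ha hb hab (measurable_one.indicator hA) (measurable_one.indicator hB)
    (measurable_one.indicator hC) fun x y => ?_
  by_cases hx : x ∈ A
  · by_cases hy : y ∈ B
    · have hxy : a • x + b • y ∈ C :=
        hABC (Set.add_mem_add (Set.smul_mem_smul_set hx) (Set.smul_mem_smul_set hy))
      simp [hx, hy, hxy]
    · simp [hy, hb]
  · simp [hx, ha]

end PrekopaLeindler

lemma prekopaLeindler_volume_pi : ∀ k : ℕ, PrekopaLeindler (volume : Measure (Fin k → ℝ))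
  | 0 => by
    intro a b _ _ _ f g h _ _ _ H
    have eval : ∀ u : (Fin 0 → ℝ) → ℝ≥0∞, ∫⁻ x, u x = u 0 := fun u => by
      rw [lintegral_unique, volume_pi, Measure.pi_empty_univ, mul_one]
      exact congrArg u (Subsingleton.elim _ _)
    simpa only [eval, smul_zero, add_zero] using H 0 0
  | k + 1 => by
    have cons_eq : ⇑(Fin.consLinearEquiv ℝ fun _ : Fin (k + 1) => ℝ) =
        (MeasurableEquiv.piFinSuccAbove (fun _ : Fin (k + 1) => ℝ) 0).symm :=
      funext fun p => (Fin.insertNth_zero' p.1 p.2).symm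
    refine (prekopaLeindler_volume_real.prod
      (prekopaLeindler_volume_pi k)).of_measurePreserving
      (Fin.consLinearEquiv ℝ fun _ : Fin (k + 1) => ℝ).toLinearMap ?_
    rw [LinearEquiv.coe_coe, cons_eq]
    exact (volume_preserving_piFinSuccAbove (fun _ : Fin (k + 1) => ℝ) 0).symm

lemma prekopaLeindler_volume {E : Type*} [NormedAddCommGroup E] [InnerProductSpace ℝ E]
    [FiniteDimensional ℝ E] [MeasurableSpace E] [BorelSpace E] :
    PrekopaLeindler (volume : Measure E) :=
  (prekopaLeindler_volume_pi _).of_measurePreserving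
    ((stdOrthonormalBasis ℝ E).repr.symm.toLinearMap ∘ₗ
      (WithLp.linearEquiv 2 ℝ (Fin (Module.finrank ℝ E) → ℝ)).symm.toLinearMap)
    ((stdOrthonormalBasis ℝ E).measurePreserving_repr_symm.comp
      (PiLp.volume_preserving_toLp _))

/-! ### Support functions -/

section SupportFunction

variable {n : ℕ} {K : Set (Eu n)}

lemma exists_norm_smul_sphere_eq {E : Type*} [NormedAddCommGroup E] [NormedSpace ℝ E] {z : E}
    (hz : z ≠ 0) : ∃ x : sphere (0 : E) 1, ‖z‖ • (x : E) = z :=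
  ⟨⟨‖z‖⁻¹ • z, by simp [norm_smul, hz]⟩, smul_inv_smul₀ (norm_ne_zero_iff.2 hz) z⟩

lemma inner_le_sfn (hK : IsCompact K) {y : Eu n} (hy : y ∈ K) (z : Eu n) : ⟪z, y⟫_ℝ ≤ sfn K z :=
  le_csSup (hK.image (by fun_prop)).bddAbove ⟨y, hy, rfl⟩

lemma exists_inner_eq_sfn (hK : IsCompact K) (hK0 : K.Nonempty) (z : Eu n) :
    ∃ y ∈ K, ⟪z, y⟫_ℝ = sfn K z := by
  obtain ⟨y, hy, h⟩ := hK.exists_sSup_image_eq (f := fun y => ⟪z, y⟫_ℝ) hK0 (by fun_prop)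
  exact ⟨y, hy, h.symm⟩

lemma sfn_smul (K : Set (Eu n)) {c : ℝ} (hc : 0 ≤ c) (z : Eu n) :
    sfn K (c • z) = c * sfn K z := by
  simp only [sfn, real_inner_smul_left]
  rw [← smul_eq_mul, ← Real.sSup_smul_of_nonneg hc, ← Set.image_smul, Set.image_image]
  rfl

lemma tens_apply (x v : Eu n) : tens x v = ⟪x, v⟫_ℝ • x := rfl

namespace IsSmoothConvexBody

variable {x z w : Eu n}

lemma nonempty (hK : IsSmoothConvexBody K) : K.Nonempty :=
  hK.interior_nonempty.mono interior_subset

lemma sfn_pos (hK : IsSmoothConvexBody K) (hz : z ≠ 0) : 0 < sfn K z := by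
  obtain ⟨x, hx⟩ := exists_norm_smul_sphere_eq hz
  rw [← hx, sfn_smul K (norm_nonneg z)]
  exact mul_pos (norm_pos_iff.2 hz) (hK.pos x)

lemma contDiffAt_sfn (hK : IsSmoothConvexBody K) (hz : z ≠ 0) :
    ContDiffAt ℝ (⊤ : ℕ∞) (sfn K) z :=
  hK.smooth.contDiffAt (isOpen_compl_singleton.mem_nhds hz)

lemma hasGradientAt_sfn (hK : IsSmoothConvexBody K) (hz : z ≠ 0) :
    HasGradientAt (sfn K) (∇ (sfn K) z) z :=
  ((hK.contDiffAt_sfn hz).differentiableAt (by simp)).hasGradientAt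

lemma contDiffAt_gradient_sfn (hK : IsSmoothConvexBody K) (hz : z ≠ 0) :
    ContDiffAt ℝ 2 (∇ (sfn K)) z := by
  have three_le : (3 : WithTop ℕ∞) ≤ (⊤ : ℕ∞) := WithTop.coe_le_coe.2 le_top
  have hfderiv : ContDiffAt ℝ 2 (fderiv ℝ (sfn K)) z :=
    ((hK.contDiffAt_sfn hz).of_le three_le).fderiv_right (by norm_num)
  exact (InnerProductSpace.toDual ℝ (Eu n)).symm.contDiff.contDiffAt.comp z hfderiv

lemma hasFDerivAt_gradient_sfn (hK : IsSmoothConvexBody K) (hz : z ≠ 0) :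
    HasFDerivAt (∇ (sfn K)) (hessA K z) z :=
  ((hK.contDiffAt_gradient_sfn hz).differentiableAt (by norm_num)).hasFDerivAt

lemma continuousAt_hessA (hK : IsSmoothConvexBody K) (hz : z ≠ 0) : ContinuousAt (hessA K) z :=
  ((hK.contDiffAt_gradient_sfn hz).fderiv_right (m := 1) (by norm_num)).continuousAt

lemma eq_gradient_sfn_of_inner_eq (hK : IsSmoothConvexBody K) {y : Eu n} (hz : z ≠ 0)
    (hy : y ∈ K) (h : ⟪z, y⟫_ℝ = sfn K z) : y = ∇ (sfn K) z := by
  have hmin : IsLocalMin (fun w => sfn K w - innerSL ℝ y w) z :=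
    .of_forall fun w => by
      simp only [innerSL_apply_apply, real_inner_comm _ y, h, sub_self, sub_nonneg]
      exact inner_le_sfn hK.compact hy w
  have hd := (hK.hasGradientAt_sfn hz).hasFDerivAt.sub (innerSL ℝ y).hasFDerivAt
  exact ((InnerProductSpace.toDual ℝ (Eu n)).injective
    (sub_eq_zero.1 (hmin.hasFDerivAt_eq_zero hd))).symm

lemma gradient_sfn_mem (hK : IsSmoothConvexBody K) (hz : z ≠ 0) : ∇ (sfn K) z ∈ K := by
  obtain ⟨y, hy, h⟩ := exists_inner_eq_sfn hK.compact hK.nonempty z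
  rwa [← hK.eq_gradient_sfn_of_inner_eq hz hy h]

lemma inner_gradient_sfn_self (hK : IsSmoothConvexBody K) (hz : z ≠ 0) :
    ⟪z, ∇ (sfn K) z⟫_ℝ = sfn K z := by
  obtain ⟨y, hy, h⟩ := exists_inner_eq_sfn hK.compact hK.nonempty z
  rwa [← hK.eq_gradient_sfn_of_inner_eq hz hy h]

lemma inner_gradient_sfn_le (hK : IsSmoothConvexBody K) (hz : z ≠ 0) (w : Eu n) :
    ⟪w, ∇ (sfn K) z⟫_ℝ ≤ sfn K w :=
  inner_le_sfn hK.compact (hK.gradient_sfn_mem hz) w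

lemma gradient_sfn_smul (hK : IsSmoothConvexBody K) {c : ℝ} (hc : 0 < c) (hz : z ≠ 0) :
    ∇ (sfn K) (c • z) = ∇ (sfn K) z := by
  have hcz : c • z ≠ 0 := smul_ne_zero hc.ne' hz
  refine hK.eq_gradient_sfn_of_inner_eq hz (hK.gradient_sfn_mem hcz) ?_
  have h := hK.inner_gradient_sfn_self hcz
  rw [sfn_smul K hc.le, real_inner_smul_left] at h
  exact mul_left_cancel₀ hc.ne' h

lemma hessA_smul (hK : IsSmoothConvexBody K) {c : ℝ} (hc : 0 < c) (hz : z ≠ 0) :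
    hessA K (c • z) = c⁻¹ • hessA K z := by
  have h₁ : HasFDerivAt (fun w => ∇ (sfn K) (c • w)) (c • hessA K (c • z)) z := by
    simpa [Function.comp_def] using (hK.hasFDerivAt_gradient_sfn (smul_ne_zero hc.ne' hz)).comp z
      ((hasFDerivAt_id z).const_smul c)
  have h₂ : HasFDerivAt (fun w => ∇ (sfn K) (c • w)) (hessA K z) z :=
    (hK.hasFDerivAt_gradient_sfn hz).congr_of_eventuallyEq
      ((eventually_ne_nhds hz).mono fun w hw => hK.gradient_sfn_smul hc hw)
  rw [← h₁.unique h₂, inv_smul_smul₀ hc.ne']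

lemma hessA_apply_self (hK : IsSmoothConvexBody K) (hz : z ≠ 0) : hessA K z z = 0 := by
  have h₁ : HasDerivAt (fun c : ℝ => ∇ (sfn K) (c • z)) (hessA K z z) 1 := by
    have hA : HasFDerivAt (∇ (sfn K)) (hessA K z) ((1 : ℝ) • z) := by
      simpa only [one_smul] using hK.hasFDerivAt_gradient_sfn hz
    simpa [Function.comp_def] using
      hA.comp_hasDerivAt (1 : ℝ) ((hasDerivAt_id (1 : ℝ)).smul_const z)
  have h₂ : HasDerivAt (fun c : ℝ => ∇ (sfn K) (c • z)) 0 1 :=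
    (hasDerivAt_const (1 : ℝ) (∇ (sfn K) z)).congr_of_eventuallyEq
      ((lt_mem_nhds zero_lt_one).mono fun c hc => hK.gradient_sfn_smul hc hz)
  exact h₁.unique h₂

lemma inner_hessA_apply_self (hK : IsSmoothConvexBody K) (hz : z ≠ 0) (v : Eu n) :
    ⟪z, hessA K z v⟫_ℝ = 0 := by
  have h₁ : HasFDerivAt (fun w => ⟪w, ∇ (sfn K) w⟫_ℝ) _ z :=
    (hasFDerivAt_id z).inner ℝ (hK.hasFDerivAt_gradient_sfn hz)
  have h₂ : HasFDerivAt (fun w => ⟪w, ∇ (sfn K) w⟫_ℝ)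
      (InnerProductSpace.toDual ℝ _ (∇ (sfn K) z)) z :=
    (hK.hasGradientAt_sfn hz).hasFDerivAt.congr_of_eventuallyEq
      ((eventually_ne_nhds hz).mono fun w hw => hK.inner_gradient_sfn_self hw)
  have h := DFunLike.congr_fun (h₁.unique h₂) v
  simpa [fderivInnerCLM_apply, real_inner_comm] using h

lemma inner_hessA_apply_pos (hK : IsSmoothConvexBody K) (x : Sph n) {v : Eu n}
    (hv : ∀ c : ℝ, v ≠ c • (x : Eu n)) : 0 < ⟪hessA K x v, v⟫_ℝ := by
  have hx : (x : Eu n) ≠ 0 := ne_zero_of_mem_unit_sphere x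
  set u := v - ⟪(x : Eu n), v⟫_ℝ • (x : Eu n) with hu
  have hxu : ⟪(x : Eu n), u⟫_ℝ = 0 := by
    simp [hu, inner_sub_right, real_inner_smul_right]
  have hAu : hessA K x u = hessA K x v := by simp [hu, hK.hessA_apply_self hx]
  have h := hK.posdef x u (sub_ne_zero.2 (hv _))
  rwa [add_apply, tens_apply, hxu, zero_smul, add_zero, hAu, hu,
    inner_sub_right, real_inner_smul_right, real_inner_comm (x : Eu n) (hessA K x v),
    hK.inner_hessA_apply_self hx, mul_zero, sub_zero] at h

lemma exists_eq_smul_of_hessA_apply_eq_zero (hK : IsSmoothConvexBody K) (hz : z ≠ 0) {v : Eu n}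
    (hv : hessA K z v = 0) : ∃ c : ℝ, v = c • z := by
  obtain ⟨x, hx⟩ := exists_norm_smul_sphere_eq hz
  have hz' : 0 < ‖z‖ := norm_pos_iff.2 hz
  rw [← hx, hK.hessA_smul hz' (ne_zero_of_mem_unit_sphere x), smul_apply,
    smul_eq_zero_iff_right (inv_ne_zero hz'.ne')] at hv
  by_contra! h
  have hpos := hK.inner_hessA_apply_pos x (v := v) fun c hc =>
    h (c * ‖z‖⁻¹) (by rw [hc, mul_smul, (inv_smul_eq_iff₀ hz'.ne').2 hx.symm])
  rw [hv, inner_zero_left] at hpos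
  exact hpos.false

lemma gradient_sfn_add_smul (hK : IsSmoothConvexBody K) (hz : z ≠ 0) (hw : w ≠ 0)
    (h : ∇ (sfn K) z = ∇ (sfn K) w) {a b : ℝ} (ha : 0 ≤ a) (hb : 0 ≤ b)
    (hab : a • z + b • w ≠ 0) : ∇ (sfn K) (a • z + b • w) = ∇ (sfn K) z := by
  refine (hK.eq_gradient_sfn_of_inner_eq hab (hK.gradient_sfn_mem hz)
    ((hK.inner_gradient_sfn_le hz _).antisymm ?_)).symm
  rw [← hK.inner_gradient_sfn_self hab, inner_add_left, inner_add_left]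
  simp only [real_inner_smul_left]
  gcongr a * ?_ + b * ?_
  · exact (hK.inner_gradient_sfn_le hab z).trans_eq (hK.inner_gradient_sfn_self hz).symm
  · exact (hK.inner_gradient_sfn_le hab w).trans_eq (h ▸ hK.inner_gradient_sfn_self hw).symm

lemma exists_eq_smul_of_gradient_sfn_eq (hK : IsSmoothConvexBody K) (hz : z ≠ 0) (hw : w ≠ 0)
    (h : ∇ (sfn K) z = ∇ (sfn K) w) : ∃ c : ℝ, 0 < c ∧ w = c • z := by
  have hA : HasDerivAt (fun s : ℝ => ∇ (sfn K) (z + s • w)) (hessA K z w) 0 := by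
    have hz' : HasFDerivAt (∇ (sfn K)) (hessA K z) (z + (0 : ℝ) • w) := by
      simpa only [zero_smul, add_zero] using hK.hasFDerivAt_gradient_sfn hz
    simpa [Function.comp_def] using
      hz'.comp_hasDerivAt (0 : ℝ) (((hasDerivAt_id (0 : ℝ)).smul_const w).const_add z)
  have hconst : HasDerivWithinAt (fun s : ℝ => ∇ (sfn K) (z + s • w)) 0 (Set.Ici 0) 0 := by
    have hne : ∀ᶠ s : ℝ in 𝓝[Set.Ici 0] 0, z + s • w ≠ 0 := nhdsWithin_le_nhds
      (ContinuousAt.eventually_ne (by fun_prop) (by simpa using hz))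
    refine (hasDerivWithinAt_const (0 : ℝ) _ (∇ (sfn K) z)).congr_of_eventuallyEq ?_ (by simp)
    filter_upwards [self_mem_nhdsWithin, hne] with s hs hsne
    simpa only [one_smul] using
      hK.gradient_sfn_add_smul hz hw h zero_le_one hs (by simpa only [one_smul] using hsne)
  obtain ⟨c, rfl⟩ := hK.exists_eq_smul_of_hessA_apply_eq_zero hz
    ((uniqueDiffOn_Ici 0 0 (by simp)).eq_deriv _ hA.hasDerivWithinAt hconst)
  have hpos := hK.sfn_pos hw
  rw [← hK.inner_gradient_sfn_self hw, ← h, real_inner_smul_left,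
    hK.inner_gradient_sfn_self hz] at hpos
  exact ⟨c, pos_of_mul_pos_left hpos (hK.sfn_pos hz).le, rfl⟩

end IsSmoothConvexBody

end SupportFunction

/-! ### The radial parametrisation -/

lemma hasFDerivAt_norm {E : Type*} [NormedAddCommGroup E] [InnerProductSpace ℝ E] {z : E}
    (hz : z ≠ 0) : HasFDerivAt (fun w : E => ‖w‖) (innerSL ℝ (‖z‖⁻¹ • z)) z := by
  have h := (hasStrictFDerivAt_norm_sq z).hasFDerivAt.sqrt (by simpa using hz)
  simp only [Real.sqrt_sq (norm_nonneg _)] at h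
  refine h.congr_fderiv ?_
  rw [map_smul, ← Nat.cast_smul_eq_nsmul ℝ, smul_smul]
  congr 1
  field_simp
  norm_num

section RadialMap

variable {n : ℕ} {K : Set (Eu n)} {z w : Eu n}

/-- The one-homogeneous extension `z ↦ ‖z‖ ∇h(z)` of the inverse Gauss map. It maps the ray
through `x ∈ S^n` onto the ray through the boundary point of `K` with normal `x`. -/
def radialMap (K : Set (Eu n)) (z : Eu n) : Eu n := ‖z‖ • ∇ (sfn K) z

/-- The derivative of `radialMap K` away from the origin. -/
def radialMapDeriv (K : Set (Eu n)) (z : Eu n) : Eu n →L[ℝ] Eu n :=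
  ‖z‖ • hessA K z + (innerSL ℝ (‖z‖⁻¹ • z)).smulRight (∇ (sfn K) z)

namespace IsSmoothConvexBody

lemma radialMap_injOn (hK : IsSmoothConvexBody K) : Set.InjOn (radialMap K) {0}ᶜ := by
  have norm_le : ∀ {z w : Eu n}, z ≠ 0 → w ≠ 0 → radialMap K z = radialMap K w → ‖z‖ ≤ ‖w‖ := by
    intro z w hz hw h
    refine le_of_mul_le_mul_right ?_ (hK.sfn_pos hz)
    calc ‖z‖ * sfn K z = ⟪z, radialMap K z⟫_ℝ := by
          rw [radialMap, real_inner_smul_right, hK.inner_gradient_sfn_self hz]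
      _ = ‖w‖ * ⟪z, ∇ (sfn K) w⟫_ℝ := by rw [h, radialMap, real_inner_smul_right]
      _ ≤ ‖w‖ * sfn K z := by gcongr; exact hK.inner_gradient_sfn_le hw z
  intro z hz w hw h
  have hz' : ‖z‖ ≠ 0 := norm_ne_zero_iff.2 hz
  have hnorm : ‖z‖ = ‖w‖ := (norm_le hz hw h).antisymm (norm_le hw hz h.symm)
  have hgrad : ∇ (sfn K) z = ∇ (sfn K) w := by
    rw [radialMap, radialMap, ← hnorm] at h
    exact smul_right_injective _ hz' h
  obtain ⟨c, hc, rfl⟩ := hK.exists_eq_smul_of_gradient_sfn_eq hz hw hgrad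
  rw [norm_smul, norm_of_nonneg hc.le, eq_comm, mul_eq_right₀ hz'] at hnorm
  rw [hnorm, one_smul]

lemma hasFDerivAt_radialMap (hK : IsSmoothConvexBody K) (hz : z ≠ 0) :
    HasFDerivAt (radialMap K) (radialMapDeriv K z) z :=
  (hasFDerivAt_norm hz).smul (hK.hasFDerivAt_gradient_sfn hz)

lemma det_radialMapDeriv (hK : IsSmoothConvexBody K) (x : Sph n) :
    (radialMapDeriv K (x : Eu n)).det = dens K x := by
  have hx : (x : Eu n) ≠ 0 := ne_zero_of_mem_unit_sphere x
  have factor : (radialMapDeriv K (x : Eu n) : Eu n →ₗ[ℝ] Eu n) =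
      LinearMap.transvection (innerSL ℝ (x : Eu n) : Eu n →ₗ[ℝ] ℝ) (∇ (sfn K) x - x) ∘ₗ
        ((hessA K x + tens (x : Eu n) : Eu n →L[ℝ] Eu n) : Eu n →ₗ[ℝ] Eu n) := by
    ext1 v
    simp [radialMapDeriv, tens_apply, LinearMap.transvection.apply, inner_add_right,
      real_inner_smul_right, hK.inner_hessA_apply_self hx, smul_sub, add_assoc]
  rw [ContinuousLinearMap.det, factor, LinearMap.det_comp, LinearMap.transvection.det]
  simp [dens, rK, inner_sub_right, hK.inner_gradient_sfn_self hx]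

lemma radialMapDeriv_smul (hK : IsSmoothConvexBody K) {c : ℝ} (hc : 0 < c) (hz : z ≠ 0) :
    radialMapDeriv K (c • z) = radialMapDeriv K z := by
  rw [radialMapDeriv, radialMapDeriv, hK.hessA_smul hc hz, hK.gradient_sfn_smul hc hz, norm_smul,
    norm_of_nonneg hc.le, smul_smul, mul_right_comm, mul_inv_cancel₀ hc.ne', one_mul, smul_smul,
    mul_inv_rev, inv_mul_cancel_right₀ hc.ne']

end IsSmoothConvexBody

end RadialMap

section Sphere

variable {n : ℕ}

instance : IsFiniteMeasure (sphMeas n) := by unfold sphMeas; infer_instance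

instance : NeZero (sphMeas n) := ⟨Measure.toSphere_ne_zero _⟩

instance : (sphMeas n).IsOpenPosMeasure := by unfold sphMeas; infer_instance

instance : Nonempty (Sph n) := (NormedSpace.sphere_nonempty.2 zero_le_one).to_subtype

lemma integrable_sphMeas {E : Type*} [NormedAddCommGroup E] {f : Sph n → E} (hf : Continuous f) :
    Integrable f (sphMeas n) :=
  hf.integrable_of_hasCompactSupport (HasCompactSupport.of_compactSpace f)

lemma integral_sphMeas_pos {f : Sph n → ℝ} (hf : Continuous f) (hpos : ∀ x, 0 < f x) :
    0 < ∫ x, f x ∂sphMeas n :=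
  hf.integral_pos_of_hasCompactSupport_nonneg_nonzero (HasCompactSupport.of_compactSpace f)
    (fun x => (hpos x).le) (hpos (Classical.arbitrary _)).ne'

lemma continuous_comp_sphere_coe {Y : Type*} [TopologicalSpace Y] {f : Eu n → Y}
    (hf : ∀ z ≠ 0, ContinuousAt f z) : Continuous fun x : Sph n => f x :=
  continuous_iff_continuousAt.2 fun x =>
    (hf x (ne_zero_of_mem_unit_sphere x)).comp continuous_subtype_val.continuousAt

end Sphere

lemma det_pos_of_inner_pos {E : Type*} [NormedAddCommGroup E] [InnerProductSpace ℝ E]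
    [FiniteDimensional ℝ E] {T : E →L[ℝ] E} (hT : ∀ v ≠ 0, 0 < ⟪T v, v⟫_ℝ) : 0 < T.det := by
  set path : ℝ → E →L[ℝ] E := fun s => (1 - s) • .id ℝ E + s • T
  have hpath : Continuous fun s => (path s).det :=
    ContinuousLinearMap.continuous_det.comp (by fun_prop)
  have det_ne_zero : ∀ s ∈ Set.Icc (0 : ℝ) 1, (path s).det ≠ 0 := by
    intro s hs h0
    obtain ⟨v, hv, hv0⟩ :=
      (Submodule.ne_bot_iff _).1 (LinearMap.bot_lt_ker_of_det_eq_zero h0).ne'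
    have hvv : 0 < ⟪v, v⟫_ℝ := real_inner_self_pos.2 hv0
    have hpos : 0 < (1 - s) * ⟪v, v⟫_ℝ + s * ⟪T v, v⟫_ℝ := by
      rcases hs.1.eq_or_lt with rfl | hs0
      · simpa only [sub_zero, one_mul, zero_mul, add_zero] using hvv
      · exact add_pos_of_nonneg_of_pos (mul_nonneg (sub_nonneg.2 hs.2) hvv.le)
          (mul_pos hs0 (hT v hv0))
    have hker : path s v = 0 := hv
    rw [← real_inner_smul_left, ← real_inner_smul_left, ← inner_add_left] at hpos
    exact hpos.ne' ((congrArg (fun w => ⟪w, v⟫_ℝ) hker).trans (inner_zero_left v))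
  by_contra! hneg
  have hsub := intermediate_value_Icc' zero_le_one hpath.continuousOn
  obtain ⟨s, hs, hs0⟩ := hsub ⟨by simpa [path] using hneg,
    by simp [path, ContinuousLinearMap.det]⟩
  exact det_ne_zero s hs hs0

section PolarCoordinates

variable {E : Type*} [NormedAddCommGroup E] [NormedSpace ℝ E]

lemma isOpenEmbedding_smul_sphere : Topology.IsOpenEmbedding
    fun p : sphere (0 : E) 1 × Set.Ioi (0 : ℝ) => (p.2 : ℝ) • (p.1 : E) :=
  isOpen_compl_singleton.isOpenEmbedding_subtypeVal.comp
    (homeomorphUnitSphereProd E).symm.isOpenEmbedding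

lemma lintegral_eq_lintegral_toSphere_volumeIoiPow [FiniteDimensional ℝ E] [Nontrivial E]
    [MeasurableSpace E] [BorelSpace E] (μ : Measure E) [μ.IsAddHaarMeasure] {f : E → ℝ≥0∞}
    (hf : Measurable f) :
    ∫⁻ z, f z ∂μ = ∫⁻ x, ∫⁻ r, f ((r : ℝ) • (x : E))
      ∂(Measure.volumeIoiPow (Module.finrank ℝ E - 1)) ∂μ.toSphere := by
  have hpolar := (μ.measurePreserving_homeomorphUnitSphereProd.symm
    (homeomorphUnitSphereProd E).toMeasurableEquiv).lintegral_comp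
      (hf.comp measurable_subtype_coe)
  calc ∫⁻ z, f z ∂μ = ∫⁻ z in ({0}ᶜ : Set E), f z ∂μ := by rw [restrict_compl_singleton]
    _ = ∫⁻ z : ({0}ᶜ : Set E), f z ∂(μ.comap (↑)) :=
      (lintegral_subtype_comap (measurableSet_singleton _).compl f).symm
    _ = ∫⁻ p : sphere (0 : E) 1 × Set.Ioi (0 : ℝ), f ((p.2 : ℝ) • (p.1 : E))
          ∂(μ.toSphere.prod (Measure.volumeIoiPow _)) := hpolar.symm
    _ = _ := lintegral_prod _
      (hf.comp isOpenEmbedding_smul_sphere.continuous.measurable).aemeasurable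

end PolarCoordinates

section RadialVolume

variable {n : ℕ} {K : Set (Eu n)} {ρ Λ : Sph n → ℝ} {x : Sph n} {r : ℝ}

/-- The star-shaped region with radial function `ρ`, without its centre `0`. -/
def starRegion (ρ : Sph n → ℝ) : Set (Eu n) :=
  (fun p : Sph n × Set.Ioi (0 : ℝ) => (p.2 : ℝ) • (p.1 : Eu n)) '' {p | (p.2 : ℝ) < ρ p.1}

lemma smul_mem_starRegion_iff (hr : 0 < r) : r • (x : Eu n) ∈ starRegion ρ ↔ r < ρ x :=
  isOpenEmbedding_smul_sphere.injective.mem_set_image (a := (x, ⟨r, hr⟩))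

lemma starRegion_subset_compl_zero : starRegion ρ ⊆ {0}ᶜ := by
  rintro _ ⟨p, -, rfl⟩
  exact smul_ne_zero p.2.2.ne' (ne_zero_of_mem_unit_sphere p.1)

lemma measurableSet_starRegion (hρ : Continuous ρ) : MeasurableSet (starRegion ρ) :=
  (isOpenEmbedding_smul_sphere.isOpenMap _
    (isOpen_lt (by fun_prop) (hρ.comp continuous_fst))).measurableSet

namespace IsSmoothConvexBody

lemma continuous_sfn (hK : IsSmoothConvexBody K) : Continuous fun x : Sph n => sfn K x :=
  continuous_comp_sphere_coe fun _ hz => (hK.contDiffAt_sfn hz).continuousAt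

lemma continuous_gradient_sfn (hK : IsSmoothConvexBody K) :
    Continuous fun x : Sph n => ∇ (sfn K) (x : Eu n) :=
  continuous_comp_sphere_coe fun _ hz => (hK.contDiffAt_gradient_sfn hz).continuousAt

lemma continuous_hessA (hK : IsSmoothConvexBody K) : Continuous fun x : Sph n => hessA K x :=
  continuous_comp_sphere_coe fun _ hz => hK.continuousAt_hessA hz

lemma continuous_dens (hK : IsSmoothConvexBody K) : Continuous fun x : Sph n => dens K x := by
  have htens : Continuous fun x : Sph n => tens (x : Eu n) := by
    change Continuous fun x : Sph n =>
      ContinuousLinearMap.smulRightL ℝ (Eu n) (Eu n) (innerSL ℝ (x : Eu n)) x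
    fun_prop
  exact hK.continuous_sfn.mul
    (ContinuousLinearMap.continuous_det.comp (hK.continuous_hessA.add htens))

lemma dens_pos (hK : IsSmoothConvexBody K) (x : Sph n) : 0 < dens K x :=
  mul_pos (hK.pos x) (det_pos_of_inner_pos (hK.posdef x))

lemma integral_dens_pos (hK : IsSmoothConvexBody K) : 0 < ∫ x : Sph n, dens K x ∂sphMeas n :=
  integral_sphMeas_pos hK.continuous_dens hK.dens_pos

lemma radialMap_smul (hK : IsSmoothConvexBody K) (hr : 0 < r) :
    radialMap K (r • (x : Eu n)) = r • ∇ (sfn K) (x : Eu n) := by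
  rw [radialMap, hK.gradient_sfn_smul hr (ne_zero_of_mem_unit_sphere x), norm_smul,
    norm_eq_of_mem_sphere, mul_one, norm_of_nonneg hr.le]

lemma smul_gradient_sfn_mem (hK : IsSmoothConvexBody K) (hr : 0 < r) (h : r < ρ x) :
    r • ∇ (sfn K) (x : Eu n) ∈ radialMap K '' starRegion ρ :=
  ⟨r • (x : Eu n), (smul_mem_starRegion_iff hr).2 h, hK.radialMap_smul hr⟩

lemma exists_of_mem_image_starRegion (hK : IsSmoothConvexBody K) {p : Eu n}
    (hp : p ∈ radialMap K '' starRegion ρ) :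
    ∃ x : Sph n, ∃ r : ℝ, 0 < r ∧ r < ρ x ∧ p = r • ∇ (sfn K) (x : Eu n) := by
  obtain ⟨_, ⟨⟨x, r⟩, hr, rfl⟩, rfl⟩ := hp
  exact ⟨x, r, r.2, hr, hK.radialMap_smul r.2⟩

lemma measurableSet_image_starRegion (hK : IsSmoothConvexBody K) (hρ : Continuous ρ) :
    MeasurableSet (radialMap K '' starRegion ρ) :=
  measurable_image_of_fderivWithin (measurableSet_starRegion hρ)
    (fun _ hz => (hK.hasFDerivAt_radialMap (starRegion_subset_compl_zero hz)).hasFDerivWithinAt)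
    (hK.radialMap_injOn.mono starRegion_subset_compl_zero)

lemma det_fderiv_radialMap_smul (hK : IsSmoothConvexBody K) (hr : 0 < r) :
    (fderiv ℝ (radialMap K) (r • (x : Eu n))).det = dens K x := by
  have hx := ne_zero_of_mem_unit_sphere x
  rw [(hK.hasFDerivAt_radialMap (smul_ne_zero hr.ne' hx)).fderiv, hK.radialMapDeriv_smul hr hx,
    hK.det_radialMapDeriv]

lemma volume_image_starRegion (hK : IsSmoothConvexBody K) (hρ : Continuous ρ)
    (hρ0 : ∀ x, 0 < ρ x) : volume (radialMap K '' starRegion ρ) =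
      ENNReal.ofReal ((∫ x : Sph n, dens K x * ρ x ^ (n + 1) ∂sphMeas n) / (n + 1)) := by
  have hmeas := measurableSet_starRegion hρ
  have radial : ∀ x : Sph n, ∫⁻ r : Set.Ioi (0 : ℝ), (starRegion ρ).indicator
      (fun z => ENNReal.ofReal |(fderiv ℝ (radialMap K) z).det|) ((r : ℝ) • (x : Eu n))
        ∂(Measure.volumeIoiPow n) = ENNReal.ofReal (dens K x * ρ x ^ (n + 1) / (n + 1)) := by
    intro x
    calc _ = ∫⁻ r, (Set.Iio (⟨ρ x, hρ0 x⟩ : Set.Ioi (0 : ℝ))).indicator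
          (fun _ => ENNReal.ofReal (dens K x)) r ∂(Measure.volumeIoiPow n) := by
          classical
          refine lintegral_congr fun r => ?_
          rw [Set.indicator_apply, Set.indicator_apply, hK.det_fderiv_radialMap_smul r.2,
            abs_of_pos (hK.dens_pos x)]
          exact if_congr (smul_mem_starRegion_iff r.2) rfl rfl
      _ = _ := by
          rw [lintegral_indicator measurableSet_Iio, setLIntegral_const,
            Measure.volumeIoiPow_apply_Iio, ← ENNReal.ofReal_mul (hK.dens_pos x).le,
            mul_div_assoc]
  have hint : Integrable (fun x : Sph n => dens K x * ρ x ^ (n + 1) / (n + 1)) (sphMeas n) :=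
    integrable_sphMeas ((hK.continuous_dens.mul (hρ.pow _)).div_const _)
  rw [← lintegral_abs_det_fderiv_eq_addHaar_image volume hmeas
      (fun z hz => (hK.hasFDerivAt_radialMap
        (starRegion_subset_compl_zero hz)).differentiableAt.hasFDerivAt.hasFDerivWithinAt)
      (hK.radialMap_injOn.mono starRegion_subset_compl_zero),
    ← lintegral_indicator hmeas, lintegral_eq_lintegral_toSphere_volumeIoiPow]
  · rw [finrank_euclideanSpace_fin, Nat.add_sub_cancel, lintegral_congr radial, ← integral_div]
    refine (ofReal_integral_eq_lintegral_ofReal hint (.of_forall fun x => ?_)).symm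
    have := hK.dens_pos x
    have := hρ0 x
    positivity
  · exact (ENNReal.measurable_ofReal.comp (continuous_abs.measurable.comp
      (ContinuousLinearMap.continuous_det.measurable.comp (measurable_fderiv ℝ _)))).indicator hmeas

lemma exists_eq_smul_gradient_sfn (hK : IsSmoothConvexBody K) {p : Eu n} (hp : p ≠ 0) :
    ∃ x : Sph n, ∃ r : ℝ, 0 < r ∧ p = r • ∇ (sfn K) (x : Eu n) := by
  have hquot : Continuous fun y : Sph n => ⟪p, (y : Eu n)⟫_ℝ / sfn K y :=
    Continuous.div (by fun_prop) hK.continuous_sfn fun y => (hK.pos y).ne'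
  obtain ⟨x, -, hmax⟩ := isCompact_univ.exists_isMaxOn Set.univ_nonempty hquot.continuousOn
  set r := ⟪p, (x : Eu n)⟫_ℝ / sfn K x with hr
  have inner_le : ∀ z ≠ 0, ⟪p, z⟫_ℝ ≤ r * sfn K z := by
    intro z hz
    obtain ⟨y, hy⟩ := exists_norm_smul_sphere_eq hz
    have hpy : ⟪p, (y : Eu n)⟫_ℝ ≤ r * sfn K y :=
      (div_le_iff₀ (hK.pos y)).1 (hmax (Set.mem_univ y))
    rw [← hy, real_inner_smul_right, sfn_smul K (norm_nonneg z), mul_left_comm]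
    exact mul_le_mul_of_nonneg_left hpy (norm_nonneg z)
  have hr0 : 0 < r := pos_of_mul_pos_left
    ((real_inner_self_pos.2 hp).trans_le (inner_le p hp)) (hK.sfn_pos hp).le
  have hmin : IsLocalMin (fun w => r * sfn K w - innerSL ℝ p w) x := by
    filter_upwards [eventually_ne_nhds (ne_zero_of_mem_unit_sphere x)] with w hw
    simpa only [innerSL_apply_apply, hr, div_mul_cancel₀ _ (hK.pos x).ne', sub_self, sub_nonneg]
      using inner_le w hw
  have hderiv := hmin.hasFDerivAt_eq_zero <|
    ((hK.hasGradientAt_sfn (ne_zero_of_mem_unit_sphere x)).hasFDerivAt.const_mul r).sub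
      (innerSL ℝ p).hasFDerivAt
  refine ⟨x, r, hr0, (InnerProductSpace.toDual ℝ (Eu n)).injective ?_⟩
  rw [map_smul]
  exact (sub_eq_zero.1 hderiv).symm

lemma ball_diff_subset_image_starRegion (hK : IsSmoothConvexBody K) {c : Eu n} {R : ℝ}
    (hR : ∀ x : Sph n, R ≤ sfn K x - ⟪(x : Eu n), c⟫_ℝ) :
    ball c R \ {0} ⊆ radialMap K '' starRegion fun _ => 1 := by
  rintro p ⟨hp, hp0⟩
  obtain ⟨x, r, hr, rfl⟩ := hK.exists_eq_smul_gradient_sfn hp0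
  have hx : (x : Eu n) ≠ 0 := ne_zero_of_mem_unit_sphere x
  refine hK.smul_gradient_sfn_mem hr (lt_of_mul_lt_mul_right ?_ (hK.pos x).le)
  have hdist : ⟪(x : Eu n), r • ∇ (sfn K) (x : Eu n) - c⟫_ℝ < R := by
    refine (real_inner_le_norm _ _).trans_lt ?_
    rwa [norm_eq_of_mem_sphere, one_mul, ← dist_eq_norm]
  rw [inner_sub_right, real_inner_smul_right, hK.inner_gradient_sfn_self hx] at hdist
  linarith [hR x]

lemma pow_mul_measureReal_sphere_le (hK : IsSmoothConvexBody K) {c : Eu n} {R : ℝ} (hR0 : 0 ≤ R)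
    (hR : ∀ x : Sph n, R ≤ sfn K x - ⟪(x : Eu n), c⟫_ℝ) :
    R ^ (n + 1) * (sphMeas n).real Set.univ ≤ ∫ x : Sph n, dens K x ∂sphMeas n := by
  have hvol := measure_mono (μ := volume) (hK.ball_diff_subset_image_starRegion hR)
  rw [measure_sdiff_null (measure_singleton _), hK.volume_image_starRegion continuous_const
    fun _ => zero_lt_one, Measure.addHaar_ball _ _ hR0, ← ofReal_measureReal (by finiteness),
    ← ENNReal.ofReal_mul (by positivity),
    ENNReal.ofReal_le_ofReal_iff (div_nonneg (by simpa using hK.integral_dens_pos.le)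
      (by positivity)), le_div_iff₀ (by positivity)] at hvol
  simp only [finrank_euclideanSpace_fin, one_pow, mul_one] at hvol
  refine le_of_eq_of_le ?_ hvol
  rw [sphMeas, Measure.toSphere_real_apply_univ, finrank_euclideanSpace_fin]
  push_cast
  ring

end IsSmoothConvexBody

end RadialVolume

/-! ### A logarithmic form of Minkowski's first inequality -/

section Minkowski

variable {n : ℕ} {K : Set (Eu n)} {ρ Λ : Sph n → ℝ}

namespace IsSmoothConvexBody

lemma smul_add_smul_subset_image_starRegion (hK : IsSmoothConvexBody K) (hΛ : ∀ x, 0 < Λ x)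
    (hρΛ : ∀ x y : Sph n, ρ y * ⟪(x : Eu n), ∇ (sfn K) y⟫_ℝ ≤ Λ x) {l : ℝ} (hl0 : 0 < l)
    (hl1 : l < 1) :
    (1 - l) • (radialMap K '' starRegion fun _ => 1) + l • (radialMap K '' starRegion ρ) ⊆
      radialMap K '' (starRegion fun x => 1 + l * (Λ x / sfn K x - 1)) ∪ {0} := by
  rintro _ ⟨_, ⟨_, hp, rfl⟩, _, ⟨_, hq, rfl⟩, rfl⟩
  obtain ⟨y, r, hr0, hr, rfl⟩ := hK.exists_of_mem_image_starRegion hp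
  obtain ⟨z, s, hs0, hs, rfl⟩ := hK.exists_of_mem_image_starRegion hq
  rw [Set.mem_union, or_iff_not_imp_right]
  intro hne
  beta_reduce at hne ⊢
  obtain ⟨x, t, ht, hxt⟩ := hK.exists_eq_smul_gradient_sfn hne
  have hx := ne_zero_of_mem_unit_sphere x
  have hr' : r * ⟪(x : Eu n), ∇ (sfn K) y⟫_ℝ < sfn K x := by
    have := hK.inner_gradient_sfn_le (ne_zero_of_mem_unit_sphere y) x
    nlinarith [hK.pos x]
  have hs' : s * ⟪(x : Eu n), ∇ (sfn K) z⟫_ℝ ≤ Λ x := by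
    rcases le_or_gt ⟪(x : Eu n), ∇ (sfn K) z⟫_ℝ 0 with h | h
    · exact (mul_nonpos_of_nonneg_of_nonpos hs0.le h).trans (hΛ x).le
    · exact (mul_le_mul_of_nonneg_right hs.le h.le).trans (hρΛ x z)
  have hsupport := congrArg (fun p => ⟪(x : Eu n), p⟫_ℝ) hxt
  simp only [inner_add_right, real_inner_smul_right, hK.inner_gradient_sfn_self hx] at hsupport
  rw [hxt]
  refine hK.smul_gradient_sfn_mem ht ?_
  have hh := hK.pos x
  refine lt_of_mul_lt_mul_right ?_ hh.le
  calc t * sfn K x < (1 - l) * sfn K x + l * Λ x := by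
        rw [← hsupport]
        exact add_lt_add_of_lt_of_le (mul_lt_mul_of_pos_left hr' (sub_pos.2 hl1))
          (mul_le_mul_of_nonneg_left hs' hl0.le)
    _ = (1 + l * (Λ x / sfn K x - 1)) * sfn K x := by field_simp; ring

lemma continuous_div_sfn (hK : IsSmoothConvexBody K) (hΛ : Continuous Λ) :
    Continuous fun x => Λ x / sfn K x :=
  hΛ.div hK.continuous_sfn fun x => (hK.pos x).ne'

lemma integral_rpow_mul_integral_rpow_le (hK : IsSmoothConvexBody K) (hρ : Continuous ρ)
    (hρ0 : ∀ x, 0 < ρ x) (hΛ : Continuous Λ) (hΛ0 : ∀ x, 0 < Λ x)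
    (hρΛ : ∀ x y : Sph n, ρ y * ⟪(x : Eu n), ∇ (sfn K) y⟫_ℝ ≤ Λ x) {l : ℝ} (hl0 : 0 < l)
    (hl1 : l < 1) :
    (∫ x : Sph n, dens K x ∂sphMeas n) ^ (1 - l) *
      (∫ x : Sph n, dens K x * ρ x ^ (n + 1) ∂sphMeas n) ^ l ≤
      ∫ x : Sph n, dens K x * (1 + l * (Λ x / sfn K x - 1)) ^ (n + 1) ∂sphMeas n := by
  set σ : Sph n → ℝ := fun x => 1 + l * (Λ x / sfn K x - 1)
  have hσ : Continuous σ :=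
    continuous_const.add (continuous_const.mul ((hK.continuous_div_sfn hΛ).sub continuous_const))
  have hσ0 : ∀ x, 0 < σ x := fun x => by
    have := mul_pos hl0 (div_pos (hΛ0 x) (hK.pos x))
    simp only [σ]
    linarith
  have integral_pos : ∀ {τ : Sph n → ℝ}, Continuous τ → (∀ x, 0 < τ x) →
      0 < ∫ x : Sph n, dens K x * τ x ^ (n + 1) ∂sphMeas n := fun hτ hτ0 =>
    integral_sphMeas_pos (hK.continuous_dens.mul (hτ.pow _))
      fun x => mul_pos (hK.dens_pos x) (pow_pos (hτ0 x) _)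
  have hV := integral_pos continuous_const fun _ => zero_lt_one
  have hI := integral_pos hρ hρ0
  have hW := integral_pos hσ hσ0
  have hvol := prekopaLeindler_volume.measure_rpow_mul_le (sub_pos.2 hl1) hl0 (sub_add_cancel 1 l)
    (hK.measurableSet_image_starRegion continuous_const) (hK.measurableSet_image_starRegion hρ)
    ((hK.measurableSet_image_starRegion hσ).union (measurableSet_singleton 0))
    (hK.smul_add_smul_subset_image_starRegion hΛ0 hρΛ hl0 hl1)
  rw [Set.union_singleton, measure_congr (insert_ae_eq_self _ _),
    hK.volume_image_starRegion continuous_const fun _ => zero_lt_one,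
    hK.volume_image_starRegion hρ hρ0, hK.volume_image_starRegion hσ hσ0,
    ENNReal.ofReal_rpow_of_pos (by positivity), ENNReal.ofReal_rpow_of_pos (by positivity),
    ← ENNReal.ofReal_mul (by positivity), ENNReal.ofReal_le_ofReal_iff (by positivity),
    div_rpow hV.le (by positivity), div_rpow hI.le (by positivity), div_mul_div_comm,
    ← rpow_add (by positivity), sub_add_cancel, rpow_one,
    div_le_div_iff_of_pos_right (by positivity)] at hvol
  simpa only [one_pow, mul_one] using hvol

end IsSmoothConvexBody

lemma mul_one_add_mul_log_le_rpow_mul_rpow {V I : ℝ} (hV : 0 < V) (hI : 0 < I) (l : ℝ) :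
    V * (1 + l * log (I / V)) ≤ V ^ (1 - l) * I ^ l := by
  have hexp : V ^ (1 - l) * I ^ l = V * exp (l * log (I / V)) := by
    rw [rpow_sub hV, rpow_one, div_mul_eq_mul_div, mul_div_assoc, ← div_rpow hI.le hV.le,
      rpow_def_of_pos (div_pos hI hV), mul_comm l]
  rw [hexp, add_comm]
  exact mul_le_mul_of_nonneg_left (add_one_le_exp _) hV.le

namespace IsSmoothConvexBody

theorem integral_dens_mul_log_le (hK : IsSmoothConvexBody K) (hρ : Continuous ρ)
    (hρ0 : ∀ x, 0 < ρ x) (hΛ : Continuous Λ) (hΛ0 : ∀ x, 0 < Λ x)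
    (hρΛ : ∀ x y : Sph n, ρ y * ⟪(x : Eu n), ∇ (sfn K) y⟫_ℝ ≤ Λ x) :
    (∫ x : Sph n, dens K x ∂sphMeas n) *
      log ((∫ x : Sph n, dens K x * ρ x ^ (n + 1) ∂sphMeas n) /
        ∫ x : Sph n, dens K x ∂sphMeas n) ≤
      (n + 1) * ∫ x : Sph n, dens K x * (Λ x / sfn K x - 1) ∂sphMeas n := by
  set V := ∫ x : Sph n, dens K x ∂sphMeas n
  set I := ∫ x : Sph n, dens K x * ρ x ^ (n + 1) ∂sphMeas n
  set u : Sph n → ℝ := fun x => Λ x / sfn K x - 1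
  have hdens := hK.continuous_dens
  have hu : Continuous u := (hK.continuous_div_sfn hΛ).sub continuous_const
  have hI : 0 < I := integral_sphMeas_pos (by fun_prop) fun x =>
    mul_pos (hK.dens_pos x) (pow_pos (hρ0 x) _)
  -- `quot l` is the difference quotient at `l` of `l ↦ ∫ dens (1 + l u)^(n+1)`.
  set quot : ℝ → ℝ := fun l =>
    ∫ x : Sph n, dens K x * (u x * ∑ i ∈ Finset.range (n + 1), (1 + l * u x) ^ i) ∂sphMeas n
  have hquot : ∀ l, ∫ x : Sph n, dens K x * (1 + l * u x) ^ (n + 1) ∂sphMeas n =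
      V + l * quot l := by
    intro l
    rw [← integral_const_mul, ← integral_add (integrable_sphMeas hdens)
      (integrable_sphMeas (by fun_prop))]
    refine integral_congr_ae (.of_forall fun x => ?_)
    linear_combination dens K x * (mul_geom_sum (1 + l * u x) (n + 1)).symm
  have hcont : Continuous quot := by
    have hjoint : Continuous (Function.uncurry fun (l : ℝ) (x : Sph n) =>
        dens K x * (u x * ∑ i ∈ Finset.range (n + 1), (1 + l * u x) ^ i)) :=
      (hdens.comp continuous_snd).mul ((hu.comp continuous_snd).mul
        (continuous_finsetSum _ fun i _ => by fun_prop))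
    simpa only [setIntegral_univ] using
      continuous_parametric_integral_of_continuous (μ := sphMeas n) hjoint isCompact_univ
  have hquot0 : quot 0 = (n + 1) * ∫ x : Sph n, dens K x * u x ∂sphMeas n := by
    simp [quot, ← integral_const_mul, mul_comm, mul_left_comm]
  rw [← hquot0]
  refine ge_of_tendsto (hcont.continuousWithinAt (s := Set.Ioi 0)) ?_
  filter_upwards [Ioo_mem_nhdsGT zero_lt_one] with l hl
  have hbm := (mul_one_add_mul_log_le_rpow_mul_rpow hK.integral_dens_pos hI l).trans
    (hK.integral_rpow_mul_integral_rpow_le hρ hρ0 hΛ hΛ0 hρΛ hl.1 hl.2)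
  rw [hquot] at hbm
  refine le_of_mul_le_mul_left ?_ hl.1
  linarith

end IsSmoothConvexBody

end Minkowski

/-! ### The spectral inequality -/

section Spectral

lemma eventually_forall_lt_of_compact {X Y : Type*} [TopologicalSpace X] [TopologicalSpace Y]
    [CompactSpace Y] {F G : X → Y → ℝ} {a : X} (hF : Continuous fun p : X × Y => F p.1 p.2)
    (hG : Continuous fun p : X × Y => G p.1 p.2) (h : ∀ y, F a y < G a y) :
    ∀ᶠ t in 𝓝 a, ∀ y, F t y < G t y := by
  simpa using isCompact_univ.eventually_forall_of_forall_eventually (P := fun t y => F t y < G t y)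
    fun y _ => hF.continuousAt.eventually_lt hG.continuousAt (h y)

lemma eventually_one_add_le_inv_one_sub_pow (m : ℕ) {κ : ℝ} (hκ : 0 < κ) :
    ∀ᶠ u : ℝ in 𝓝 0, 1 + m * u + (m * (m + 1) / 2 - κ) * u ^ 2 ≤ (1 - u)⁻¹ ^ m := by
  induction m generalizing κ with
  | zero => exact .of_forall fun u => by simpa using mul_nonneg hκ.le (sq_nonneg u)
  | succ m ih =>
    have hcubic : ∀ᶠ u : ℝ in 𝓝 0, ((κ - (m + 1) * (m + 2) / 2) * u < κ / 2) :=
      (Continuous.tendsto' (by fun_prop) 0 0 (by simp)).eventually_lt_const (half_pos hκ)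
    filter_upwards [ih (half_pos hκ), hcubic, gt_mem_nhds one_pos] with u hu hcubic hu1
    rw [pow_succ (1 - u)⁻¹, ← div_eq_mul_inv, le_div_iff₀ (sub_pos.2 hu1)]
    push_cast
    linear_combination hu + u ^ 2 * hcubic.le

lemma le_of_eventually_mul_log_le {V a b : ℝ} {I : ℝ → ℝ} (hV : 0 < V)
    (hI : ∀ᶠ t in 𝓝[>] 0, V + t ^ 2 * a ≤ I t)
    (hlog : ∀ᶠ t in 𝓝[>] 0, V * log (I t / V) ≤ t ^ 2 * b) : a ≤ b := by
  have hpos : ∀ᶠ t in 𝓝[>] 0, 0 < V + t ^ 2 * a :=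
    nhdsWithin_le_nhds <| (Continuous.tendsto' (by fun_prop) 0 V (by simp)).eventually_const_lt hV
  have hlim : Tendsto (fun t : ℝ => b * (V + t ^ 2 * a)) (𝓝[>] 0) (𝓝 (b * V)) :=
    tendsto_nhdsWithin_of_tendsto_nhds (Continuous.tendsto' (by fun_prop) _ _ (by simp))
  refine le_of_mul_le_mul_right (ge_of_tendsto hlim ?_) hV
  filter_upwards [hI, hlog, hpos, self_mem_nhdsWithin] with t hI hlog hpos ht
  refine le_of_mul_le_mul_left ?_ (pow_pos ht 2 : 0 < t ^ 2)
  calc t ^ 2 * (a * V) = V * (1 - ((V + t ^ 2 * a) / V)⁻¹) * (V + t ^ 2 * a) := by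
        field_simp
        ring
    _ ≤ V * log (I t / V) * (V + t ^ 2 * a) := by
        gcongr
        exact (one_sub_inv_le_log_of_pos (div_pos hpos hV)).trans
          (log_le_log (div_pos hpos hV) (by gcongr))
    _ ≤ t ^ 2 * (b * (V + t ^ 2 * a)) := by
        rw [← mul_assoc]
        gcongr

variable {n : ℕ} {K : Set (Eu n)} {e : Eu n} {c η t : ℝ}

namespace IsSmoothConvexBody

lemma exists_norm_gradient_sfn_add_sub_le (hK : IsSmoothConvexBody K) (hη : 0 < η) :
    ∃ δ : ℝ, 0 < δ ∧ ∀ (x : Sph n) (w : Eu n), ‖w‖ ≤ δ → (x : Eu n) + w ≠ 0 ∧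
      ‖∇ (sfn K) (x + w) - ∇ (sfn K) x - hessA K x w‖ ≤ η * ‖w‖ := by
  obtain ⟨δ, hδ, hA⟩ := mem_uniformity_dist.1 <|
    (isCompact_sphere (0 : Eu n) 1).uniformContinuousAt_of_continuousAt (f := hessA K)
      (fun z hz => hK.continuousAt_hessA (ne_zero_of_mem_unit_sphere ⟨z, hz⟩))
      (dist_mem_uniformity hη)
  have hr : 0 < min (δ / 2) (1 / 2) := by positivity
  refine ⟨_, hr, fun x w hw => ?_⟩
  have hne : ∀ y ∈ closedBall (x : Eu n) (min (δ / 2) (1 / 2)), y ≠ 0 := by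
    rintro y hy rfl
    have hle := (mem_closedBall.1 hy).trans (min_le_right _ _)
    rw [dist_zero_left, norm_eq_of_mem_sphere] at hle
    norm_num at hle
  have hx := mem_closedBall_self (x := (x : Eu n)) hr.le
  have hxw : (x : Eu n) + w ∈ closedBall (x : Eu n) (min (δ / 2) (1 / 2)) := by
    simpa [dist_eq_norm] using hw
  refine ⟨hne _ hxw, ?_⟩
  have hA' : ∀ z ∈ closedBall (x : Eu n) (min (δ / 2) (1 / 2)),
      ‖hessA K z - hessA K x‖ ≤ η := fun z hz => by
    have hlt : dist (x : Eu n) z < δ := by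
      rw [dist_comm]
      linarith [(mem_closedBall.1 hz).trans (min_le_left _ _)]
    rw [← dist_eq_norm, dist_comm]
    exact (show dist _ _ < η from hA hlt x.2).le
  simpa using (convex_closedBall _ _).norm_image_sub_le_of_norm_hasFDerivWithin_le'
    (fun z hz => (hK.hasFDerivAt_gradient_sfn (hne z hz)).hasFDerivWithinAt) hA' hx hxw

lemma exists_abs_sfn_add_sub_le (hK : IsSmoothConvexBody K) (hη : 0 < η) :
    ∃ δ : ℝ, 0 < δ ∧ ∀ (x : Sph n) (w : Eu n), ‖w‖ ≤ δ →
      |sfn K (x + w) - (sfn K x + ⟪∇ (sfn K) x, w⟫_ℝ + 1 / 2 * ⟪hessA K x w, w⟫_ℝ)| ≤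
        η * ‖w‖ ^ 2 := by
  obtain ⟨δ, hδ, hgrad⟩ := hK.exists_norm_gradient_sfn_add_sub_le hη
  refine ⟨δ, hδ, fun x w hw => ?_⟩
  have hsw : ∀ s ∈ Set.Icc (0 : ℝ) 1, ‖s • w‖ ≤ ‖w‖ := fun s hs => by
    rw [norm_smul, norm_of_nonneg hs.1]
    exact mul_le_of_le_one_left (norm_nonneg w) hs.2
  have hderiv : ∀ s ∈ Set.Icc (0 : ℝ) 1, HasDerivAt (fun s : ℝ => sfn K (x + s • w) -
        (s * ⟪∇ (sfn K) x, w⟫_ℝ + s ^ 2 * (1 / 2 * ⟪hessA K x w, w⟫_ℝ)))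
      ⟪∇ (sfn K) (x + s • w) - ∇ (sfn K) x - hessA K x (s • w), w⟫_ℝ s := by
    intro s hs
    have hline : HasDerivAt (fun s : ℝ => (x : Eu n) + s • w) w s := by
      simpa using ((hasDerivAt_id s).smul_const w).const_add (x : Eu n)
    refine (((hK.hasGradientAt_sfn (hgrad x _ ((hsw s hs).trans hw)).1).hasFDerivAt.comp_hasDerivAt
      s hline).sub (((hasDerivAt_id s).mul_const _).add
        ((hasDerivAt_pow 2 s).mul_const _))).congr_deriv ?_
    simp only [InnerProductSpace.toDual_apply_apply, inner_sub_left, map_smul,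
      real_inner_smul_left]
    push_cast
    ring
  have hbound := norm_image_sub_le_of_norm_deriv_le_segment_01' (C := η * ‖w‖ ^ 2)
    (fun s hs => (hderiv s hs).hasDerivWithinAt) fun s hs => by
      have hs' := Set.Ico_subset_Icc_self hs
      calc _ ≤ η * ‖s • w‖ * ‖w‖ := (norm_inner_le_norm _ _).trans
            (mul_le_mul_of_nonneg_right (hgrad x _ ((hsw s hs').trans hw)).2 (norm_nonneg w))
        _ ≤ η * ‖w‖ ^ 2 := by
            rw [sq, ← mul_assoc]
            gcongr
            exact hsw s hs'
  rw [norm_eq_abs] at hbound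
  convert hbound using 2
  simp only [one_smul, zero_smul, add_zero]
  ring

lemma inner_gradient_sfn_le_of_sfn_add_le (hK : IsSmoothConvexBody K) {x y : Sph n} {l : ℝ}
    (h : sfn K (x + (t * l) • e) ≤ l * (1 + t * c)) :
    ⟪(x : Eu n), ∇ (sfn K) y⟫_ℝ ≤ l * (1 - t * (⟪e, ∇ (sfn K) y⟫_ℝ - c)) := by
  have hle := (hK.inner_gradient_sfn_le (ne_zero_of_mem_unit_sphere y) _).trans h
  rw [inner_add_left, real_inner_smul_left] at hle
  linarith

end IsSmoothConvexBody

/-- To second order in `t` and up to the slack `t ^ 2 * η`, the support function of the image of `K`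
under the projective map `y ↦ (1 - t * (⟪e, y⟫ - c))⁻¹ • y`. -/
def projectiveSfn (K : Set (Eu n)) (e : Eu n) (c η t : ℝ) (x : Eu n) : ℝ :=
  sfn K x + t * (sfn K x * (⟪e, ∇ (sfn K) x⟫_ℝ - c)) +
    t ^ 2 * (sfn K x * (⟪e, ∇ (sfn K) x⟫_ℝ - c) ^ 2 +
      1 / 2 * sfn K x ^ 2 * ⟪hessA K x e, e⟫_ℝ + η)

namespace IsSmoothConvexBody

lemma continuous_projectiveSfn (hK : IsSmoothConvexBody K) :
    Continuous fun p : ℝ × Sph n => projectiveSfn K e c η p.1 p.2 := by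
  have hh := hK.continuous_sfn.comp (continuous_snd (X := ℝ))
  have hX := hK.continuous_gradient_sfn.comp (continuous_snd (X := ℝ))
  have hA := hK.continuous_hessA.comp (continuous_snd (X := ℝ))
  simp only [Function.comp_def] at hh hX hA
  unfold projectiveSfn
  fun_prop

lemma eventually_projectiveSfn_remainder_lt (hK : IsSmoothConvexBody K) {κ : ℝ}
    (hκη : ∀ x : Sph n, κ * sfn K x ^ 2 < η) : ∀ᶠ t in 𝓝 (0 : ℝ), ∀ x : Sph n,
    t * (sfn K x * (⟪e, ∇ (sfn K) x⟫_ℝ - c) ^ 2 + 1 / 2 * sfn K x ^ 2 * ⟪hessA K x e, e⟫_ℝ + η) *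
        (⟪e, ∇ (sfn K) x⟫_ℝ - c) +
      1 / 2 * (projectiveSfn K e c η t x ^ 2 - sfn K x ^ 2) * ⟪hessA K x e, e⟫_ℝ +
      κ * projectiveSfn K e c η t x ^ 2 < η := by
  have hΛ := hK.continuous_projectiveSfn (e := e) (c := c) (η := η)
  have hh := hK.continuous_sfn.comp (continuous_snd (X := ℝ))
  have hX := hK.continuous_gradient_sfn.comp (continuous_snd (X := ℝ))
  have hA := hK.continuous_hessA.comp (continuous_snd (X := ℝ))
  simp only [Function.comp_def] at hh hX hA
  exact eventually_forall_lt_of_compact (by fun_prop) continuous_const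
    fun x => by simpa [projectiveSfn] using hκη x

lemma eventually_sfn_add_smul_le (hK : IsSmoothConvexBody K) (he : ‖e‖ = 1) (hη : 0 < η) :
    ∀ᶠ t in 𝓝 0, ∀ x : Sph n, sfn K (x + (t * projectiveSfn K e c η t x) • e) ≤
      projectiveSfn K e c η t x * (1 + t * c) := by
  have hsmallκ : ∀ᶠ κ in 𝓝 (0 : ℝ), ∀ x : Sph n, κ * sfn K x ^ 2 < η :=
    eventually_forall_lt_of_compact
      (continuous_fst.mul ((hK.continuous_sfn.comp continuous_snd).pow 2)) continuous_const
      fun x => by simpa using hη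
  obtain ⟨κ, hκη, hκ⟩ :=
    ((hsmallκ.filter_mono nhdsWithin_le_nhds).and (self_mem_nhdsWithin (s := Set.Ioi 0))).exists
  obtain ⟨δ, hδ, htaylor⟩ := hK.exists_abs_sfn_add_sub_le hκ
  have hstep : ∀ᶠ t in 𝓝 (0 : ℝ), ∀ x : Sph n, ‖(t * projectiveSfn K e c η t x) • e‖ < δ :=
    eventually_forall_lt_of_compact
      ((continuous_fst.mul hK.continuous_projectiveSfn).smul continuous_const).norm
      continuous_const fun x => by simpa using hδ
  filter_upwards [hstep, hK.eventually_projectiveSfn_remainder_lt (e := e) (c := c) hκη]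
    with t hstep hrem x
  have hupper := (abs_le.1 (htaylor x _ (hstep x).le)).2
  simp only [norm_smul, he, mul_one, norm_eq_abs, sq_abs, map_smul, real_inner_smul_left,
    real_inner_smul_right] at hupper
  rw [real_inner_comm] at hupper
  have hgap := mul_le_mul_of_nonneg_left (hrem x).le (sq_nonneg t)
  have hΛ : projectiveSfn K e c η t x = sfn K x + t * (sfn K x * (⟪e, ∇ (sfn K) x⟫_ℝ - c)) +
    t ^ 2 * (sfn K x * (⟪e, ∇ (sfn K) x⟫_ℝ - c) ^ 2 +
      1 / 2 * sfn K x ^ 2 * ⟪hessA K x e, e⟫_ℝ + η) := rfl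
  linear_combination hupper + hgap - (1 - t * (⟪e, ∇ (sfn K) x⟫_ℝ - c)) * hΛ

lemma continuous_inner_gradient_sfn_sub (hK : IsSmoothConvexBody K) :
    Continuous fun x : Sph n => ⟪e, ∇ (sfn K) x⟫_ℝ - c :=
  (continuous_const.inner hK.continuous_gradient_sfn).sub continuous_const

lemma integral_dens_mul_projectiveSfn_div_sub_one (hK : IsSmoothConvexBody K)
    (hc : ∫ x : Sph n, dens K x * (⟪e, ∇ (sfn K) x⟫_ℝ - c) ∂sphMeas n = 0) :
    ∫ x : Sph n, dens K x * (projectiveSfn K e c η t x / sfn K x - 1) ∂sphMeas n =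
      t ^ 2 * ((∫ x : Sph n, dens K x * (⟪e, ∇ (sfn K) x⟫_ℝ - c) ^ 2 ∂sphMeas n) +
        (∫ x : Sph n, dens K x * (sfn K x * ⟪hessA K x e, e⟫_ℝ) ∂sphMeas n) / 2 +
        η * ∫ x : Sph n, dens K x * (sfn K x)⁻¹ ∂sphMeas n) := by
  have hh := hK.continuous_sfn
  have hd := hK.continuous_dens
  have hf := hK.continuous_inner_gradient_sfn_sub (e := e) (c := c)
  have hA : Continuous fun x : Sph n => ⟪hessA K x e, e⟫_ℝ :=
    (hK.continuous_hessA.clm_apply continuous_const).inner continuous_const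
  have hinv : Continuous fun x : Sph n => (sfn K x)⁻¹ := hh.inv₀ fun x => (hK.pos x).ne'
  have hexpand : ∀ x : Sph n, dens K x * (projectiveSfn K e c η t x / sfn K x - 1) =
      t * (dens K x * (⟪e, ∇ (sfn K) x⟫_ℝ - c)) +
      (t ^ 2 * (dens K x * (⟪e, ∇ (sfn K) x⟫_ℝ - c) ^ 2) +
      (t ^ 2 / 2 * (dens K x * (sfn K x * ⟪hessA K x e, e⟫_ℝ)) +
        t ^ 2 * η * (dens K x * (sfn K x)⁻¹))) := fun x => by
    have := (hK.pos x).ne'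
    rw [projectiveSfn]
    field_simp
    ring
  simp only [hexpand]
  rw [integral_add (integrable_sphMeas (by fun_prop)) (integrable_sphMeas (by fun_prop)),
    integral_add (integrable_sphMeas (by fun_prop)) (integrable_sphMeas (by fun_prop)),
    integral_add (integrable_sphMeas (by fun_prop)) (integrable_sphMeas (by fun_prop))]
  simp only [integral_const_mul, hc]
  ring

lemma eventually_le_integral_dens_mul_inv_pow (hK : IsSmoothConvexBody K) (m : ℕ) (hη : 0 < η)
    (hc : ∫ x : Sph n, dens K x * (⟪e, ∇ (sfn K) x⟫_ℝ - c) ∂sphMeas n = 0) :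
    ∀ᶠ t in 𝓝 0, (∫ x : Sph n, dens K x ∂sphMeas n) + t ^ 2 * ((m * (m + 1) / 2 - η) *
        ∫ x : Sph n, dens K x * (⟪e, ∇ (sfn K) x⟫_ℝ - c) ^ 2 ∂sphMeas n) ≤
      ∫ x : Sph n, dens K x * (1 - t * (⟪e, ∇ (sfn K) x⟫_ℝ - c))⁻¹ ^ m ∂sphMeas n := by
  have hd := hK.continuous_dens
  have hf := hK.continuous_inner_gradient_sfn_sub (e := e) (c := c)
  have htf : Continuous fun p : ℝ × Sph n => p.1 * (⟪e, ∇ (sfn K) p.2⟫_ℝ - c) :=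
    continuous_fst.mul (hf.comp continuous_snd)
  have hlt : ∀ᶠ t in 𝓝 (0 : ℝ), ∀ x : Sph n, t * (⟪e, ∇ (sfn K) x⟫_ℝ - c) < 1 :=
    eventually_forall_lt_of_compact htf continuous_const fun x => by simp
  have hpow : ∀ᶠ t in 𝓝 (0 : ℝ), ∀ x ∈ (Set.univ : Set (Sph n)),
      1 + m * (t * (⟪e, ∇ (sfn K) x⟫_ℝ - c)) +
        (m * (m + 1) / 2 - η) * (t * (⟪e, ∇ (sfn K) x⟫_ℝ - c)) ^ 2 ≤
      (1 - t * (⟪e, ∇ (sfn K) x⟫_ℝ - c))⁻¹ ^ m :=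
    isCompact_univ.eventually_forall_of_forall_eventually fun x _ =>
      (htf.tendsto' (0, x) 0 (by simp)).eventually (eventually_one_add_le_inv_one_sub_pow m hη)
  filter_upwards [hlt, hpow] with t hlt hpow
  have hinv : Continuous fun x : Sph n => (1 - t * (⟪e, ∇ (sfn K) x⟫_ℝ - c))⁻¹ :=
    Continuous.inv₀ (by fun_prop) fun x => (sub_pos.2 (hlt x)).ne'
  calc _ = ∫ x : Sph n, (dens K x + (m * t * (dens K x * (⟪e, ∇ (sfn K) x⟫_ℝ - c)) +
          (m * (m + 1) / 2 - η) * t ^ 2 * (dens K x * (⟪e, ∇ (sfn K) x⟫_ℝ - c) ^ 2)))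
          ∂sphMeas n := by
        rw [integral_add (integrable_sphMeas (by fun_prop)) (integrable_sphMeas (by fun_prop)),
          integral_add (integrable_sphMeas (by fun_prop)) (integrable_sphMeas (by fun_prop))]
        simp only [integral_const_mul, hc]
        ring
    _ ≤ _ := by
        refine integral_mono (integrable_sphMeas (by fun_prop)) (integrable_sphMeas (by fun_prop))
          fun x => ?_
        beta_reduce
        linear_combination mul_le_mul_of_nonneg_left (hpow x trivial) (hK.dens_pos x).le

lemma eventually_integral_dens_mul_log_le (hK : IsSmoothConvexBody K) (he : ‖e‖ = 1) (hη : 0 < η)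
    (hc : ∫ x : Sph n, dens K x * (⟪e, ∇ (sfn K) x⟫_ℝ - c) ∂sphMeas n = 0) :
    ∀ᶠ t in 𝓝[>] 0, (∫ x : Sph n, dens K x ∂sphMeas n) *
      log ((∫ x : Sph n, dens K x * (1 - t * (⟪e, ∇ (sfn K) x⟫_ℝ - c))⁻¹ ^ (n + 1) ∂sphMeas n) /
        ∫ x : Sph n, dens K x ∂sphMeas n) ≤
      t ^ 2 * ((n + 1) * ((∫ x : Sph n, dens K x * (⟪e, ∇ (sfn K) x⟫_ℝ - c) ^ 2 ∂sphMeas n) +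
        (∫ x : Sph n, dens K x * (sfn K x * ⟪hessA K x e, e⟫_ℝ) ∂sphMeas n) / 2 +
        η * ∫ x : Sph n, dens K x * (sfn K x)⁻¹ ∂sphMeas n)) := by
  have hf := hK.continuous_inner_gradient_sfn_sub (e := e) (c := c)
  have hlt : ∀ᶠ t in 𝓝 (0 : ℝ), ∀ x : Sph n, t * (⟪e, ∇ (sfn K) x⟫_ℝ - c) < 1 :=
    eventually_forall_lt_of_compact (continuous_fst.mul (hf.comp continuous_snd))
      continuous_const fun x => by simp
  have hΛ : ∀ᶠ t in 𝓝 (0 : ℝ), ∀ x : Sph n, 0 < projectiveSfn K e c η t x :=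
    eventually_forall_lt_of_compact continuous_const hK.continuous_projectiveSfn
      fun x => by simpa [projectiveSfn] using hK.pos x
  filter_upwards [nhdsWithin_le_nhds hlt, nhdsWithin_le_nhds hΛ,
    nhdsWithin_le_nhds (hK.eventually_sfn_add_smul_le he hη (c := c))] with t hlt hΛ hle
  have hpos : ∀ x : Sph n, 0 < 1 - t * (⟪e, ∇ (sfn K) x⟫_ℝ - c) := fun x => sub_pos.2 (hlt x)
  have hlog := hK.integral_dens_mul_log_le
    (ρ := fun x : Sph n => (1 - t * (⟪e, ∇ (sfn K) x⟫_ℝ - c))⁻¹)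
    (Continuous.inv₀ (by fun_prop) fun x => (hpos x).ne') (fun x => inv_pos.2 (hpos x))
    (hK.continuous_projectiveSfn.comp (.prodMk_right t)) hΛ
    fun x y => by
      rw [inv_mul_le_iff₀' (hpos y)]
      exact hK.inner_gradient_sfn_le_of_sfn_add_le (hle x)
  refine hlog.trans_eq ?_
  rw [Function.comp_def, hK.integral_dens_mul_projectiveSfn_div_sub_one hc]
  ring

theorem mul_integral_dens_mul_sq_le (hK : IsSmoothConvexBody K) (he : ‖e‖ = 1)
    (hc : ∫ x : Sph n, dens K x * (⟪e, ∇ (sfn K) x⟫_ℝ - c) ∂sphMeas n = 0) :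
    n * ∫ x : Sph n, dens K x * (⟪e, ∇ (sfn K) x⟫_ℝ - c) ^ 2 ∂sphMeas n ≤
      ∫ x : Sph n, dens K x * (sfn K x * ⟪hessA K x e, e⟫_ℝ) ∂sphMeas n := by
  set E := ∫ x : Sph n, dens K x * (⟪e, ∇ (sfn K) x⟫_ℝ - c) ^ 2 ∂sphMeas n
  set P := ∫ x : Sph n, dens K x * (sfn K x * ⟪hessA K x e, e⟫_ℝ) ∂sphMeas n
  set D := ∫ x : Sph n, dens K x * (sfn K x)⁻¹ ∂sphMeas n
  have hsecond : ∀ η > 0, ((n + 1) * (n + 2) / 2 - η) * E ≤ (n + 1) * (E + P / 2 + η * D) := by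
    intro η hη
    have hlower := hK.eventually_le_integral_dens_mul_inv_pow (n + 1) hη hc
    push_cast at hlower
    rw [add_assoc (n : ℝ), one_add_one_eq_two] at hlower
    exact le_of_eventually_mul_log_le hK.integral_dens_pos (nhdsWithin_le_nhds hlower)
      (hK.eventually_integral_dens_mul_log_le he hη hc)
  have hlimit : (n + 1) * ((n + 2) / 2 * E) ≤ (n + 1) * (E + P / 2) :=
    le_of_tendsto_of_tendsto (b := 𝓝[>] (0 : ℝ))
      (tendsto_nhdsWithin_of_tendsto_nhds
        (Continuous.tendsto' (f := fun η => ((n + 1) * (n + 2) / 2 - η) * E) (by fun_prop) 0 _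
          (by ring)))
      (tendsto_nhdsWithin_of_tendsto_nhds
        (Continuous.tendsto' (f := fun η => (n + 1) * (E + P / 2 + η * D)) (by fun_prop) 0 _
          (by ring)))
      (eventually_nhdsWithin_of_forall hsecond)
  linarith [le_of_mul_le_mul_left hlimit (by positivity)]

lemma integral_dens_mul_inner_sub_inner_cK (hK : IsSmoothConvexBody K) (e : Eu n) :
    ∫ x : Sph n, dens K x * (⟪e, ∇ (sfn K) x⟫_ℝ - ⟪e, cK K⟫_ℝ) ∂sphMeas n = 0 := by
  have hd := hK.continuous_dens
  have hX := hK.continuous_gradient_sfn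
  have hmean : ∫ x : Sph n, dens K x * ⟪e, ∇ (sfn K) x⟫_ℝ ∂sphMeas n =
      ⟪e, ∫ x : Sph n, dens K x • ∇ (sfn K) x ∂sphMeas n⟫_ℝ := by
    rw [← integral_inner (integrable_sphMeas (by fun_prop))]
    simp only [real_inner_smul_right]
  simp only [mul_sub]
  rw [integral_sub (integrable_sphMeas (by fun_prop)) (integrable_sphMeas (by fun_prop)),
    integral_mul_const, hmean, cK, real_inner_smul_right,
    mul_inv_cancel_left₀ hK.integral_dens_pos.ne', sub_self]

theorem mul_integral_dens_mul_norm_sq_le (hK : IsSmoothConvexBody K) :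
    n * ∫ x : Sph n, dens K x * ‖∇ (sfn K) x - cK K‖ ^ 2 ∂sphMeas n ≤
      ∫ x : Sph n, dens K x * (sfn K x * LinearMap.trace ℝ (Eu n) (hessA K x)) ∂sphMeas n := by
  have hd := hK.continuous_dens
  have hh := hK.continuous_sfn
  have hX := hK.continuous_gradient_sfn
  have hA := hK.continuous_hessA
  set b := EuclideanSpace.basisFun (Fin (n + 1)) ℝ
  have hnorm : ∀ x : Sph n, dens K x * ‖∇ (sfn K) x - cK K‖ ^ 2 =
      ∑ i, dens K x * (⟪b i, ∇ (sfn K) x⟫_ℝ - ⟪b i, cK K⟫_ℝ) ^ 2 := fun x => by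
    rw [← b.sum_sq_norm_inner_right, Finset.mul_sum]
    simp only [inner_sub_right, norm_eq_abs, sq_abs]
  have htrace : ∀ x : Sph n, dens K x * (sfn K x * LinearMap.trace ℝ (Eu n) (hessA K x)) =
      ∑ i, dens K x * (sfn K x * ⟪hessA K x (b i), b i⟫_ℝ) := fun x => by
    rw [LinearMap.trace_eq_sum_inner _ b, Finset.mul_sum, Finset.mul_sum]
    simp only [real_inner_comm, ContinuousLinearMap.coe_coe]
  simp only [hnorm, htrace]
  rw [integral_finsetSum _ fun i _ => integrable_sphMeas (by fun_prop),
    integral_finsetSum _ fun i _ => integrable_sphMeas (by fun_prop), Finset.mul_sum]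
  exact Finset.sum_le_sum fun i _ =>
    hK.mul_integral_dens_mul_sq_le (b.norm_eq_one i) (hK.integral_dens_mul_inner_sub_inner_cK _)

end IsSmoothConvexBody

end Spectral

/-! ### The divergence theorem on the sphere -/

section Divergence

variable {E : Type*} [NormedAddCommGroup E]

/-- A bump function on `(1, 2)`, the radial profile of `annularCutoff`. -/
def radialBump : ContDiffBump (3 / 2 : ℝ) := ⟨1 / 4, 1 / 2, by norm_num, by norm_num⟩

/-- A radial cutoff function supported in the annulus `1 ≤ ‖z‖² ≤ 2`, which turns homogeneous
functions on `E \ {0}` into compactly supported functions on `E`. -/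
def annularCutoff (z : E) : ℝ := radialBump (‖z‖ ^ 2)

lemma support_annularCutoff_subset :
    Function.support (annularCutoff : E → ℝ) ⊆ {z | ‖z‖ ^ 2 ∈ Set.Icc 1 2} := by
  intro z hz
  have hball : ‖z‖ ^ 2 ∈ ball (3 / 2 : ℝ) (1 / 2) := by
    rwa [← show radialBump.rOut = 1 / 2 from rfl, ← radialBump.support_eq]
  rw [mem_ball, Real.dist_eq, abs_lt] at hball
  exact ⟨by linarith, by linarith⟩

lemma ne_zero_of_mem_tsupport_annularCutoff {z : E}
    (hz : z ∈ tsupport (annularCutoff : E → ℝ)) : z ≠ 0 := by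
  rintro rfl
  have h := closure_minimal support_annularCutoff_subset (isClosed_Icc.preimage (by fun_prop)) hz
  norm_num at h

lemma hasCompactSupport_annularCutoff [ProperSpace E] :
    HasCompactSupport (annularCutoff : E → ℝ) := by
  refine .of_support_subset_isCompact (isCompact_closedBall (0 : E) 2) fun _ hz => ?_
  have h := (support_annularCutoff_subset hz).2
  rw [mem_closedBall_zero_iff]
  nlinarith [h]

lemma annularCutoff_smul [NormedSpace ℝ E] (x : sphere (0 : E) 1) {r : ℝ} (hr : 0 < r) :
    annularCutoff (r • (x : E)) = radialBump (r ^ 2) := by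
  rw [annularCutoff, norm_smul, norm_eq_of_mem_sphere, mul_one, norm_of_nonneg hr.le]

lemma continuous_annularCutoff : Continuous (annularCutoff : E → ℝ) :=
  radialBump.continuous.comp (by fun_prop)

lemma continuous_annularCutoff_mul {f : E → ℝ} (hf : ContinuousOn f {0}ᶜ) :
    Continuous fun z => annularCutoff z * f z :=
  continuous_of_tsupport fun _ hz => continuous_annularCutoff.continuousAt.mul
    (hf.continuousAt (isOpen_compl_singleton.mem_nhds
      (ne_zero_of_mem_tsupport_annularCutoff (tsupport_mul_subset_left hz))))

variable [InnerProductSpace ℝ E]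

lemma contDiff_annularCutoff_smul {F : Type*} [NormedAddCommGroup F] [NormedSpace ℝ F] {W : E → F}
    (hW : ContDiffOn ℝ 1 W {0}ᶜ) : ContDiff ℝ 1 fun z => annularCutoff z • W z := by
  refine contDiff_iff_contDiffAt.2 fun z => ?_
  by_cases hz : z ∈ tsupport (annularCutoff : E → ℝ)
  · exact (radialBump.contDiff.comp (contDiff_norm_sq ℝ)).contDiffAt.smul
      (hW.contDiffAt (isOpen_compl_singleton.mem_nhds (ne_zero_of_mem_tsupport_annularCutoff hz)))
  · have hzero := notMem_tsupport_iff_eventuallyEq.1 hz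
    exact contDiffAt_const.congr_of_eventuallyEq
      (hzero.mono fun y hy => (congrArg (· • W y) hy).trans (zero_smul ℝ _))

lemma hasFDerivAt_annularCutoff (z : E) : HasFDerivAt (annularCutoff : E → ℝ)
    (deriv radialBump (‖z‖ ^ 2) • (2 : ℝ) • innerSL ℝ z) z := by
  have hbump : HasDerivAt radialBump (deriv radialBump (‖z‖ ^ 2)) (‖z‖ ^ 2) :=
    (radialBump.contDiff.differentiable one_ne_zero _).hasDerivAt
  exact (hbump.comp_hasFDerivAt z (hasStrictFDerivAt_norm_sq z).hasFDerivAt).congr_fderiv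
    (by ext v; simp)

lemma fderiv_smul_of_homogeneous {W : E → E} {z : E} {r : ℝ} (hr : 0 < r)
    (hom : ∀ z, W (r • z) = r • W z) : fderiv ℝ W (r • z) = fderiv ℝ W z := by
  have hderiv : r • fderiv ℝ W (r • z) = r • fderiv ℝ W z := by
    rw [← fderiv_comp_smul, funext hom]
    exact congrFun (fderiv_const_smul_field r) z
  exact smul_right_injective _ hr.ne' hderiv

variable [FiniteDimensional ℝ E]

lemma continuous_trace : Continuous fun T : E →L[ℝ] E => LinearMap.trace ℝ E T :=
  (LinearMap.trace ℝ E ∘ₗ ContinuousLinearMap.coeLM ℝ).continuous_of_finiteDimensional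

lemma trace_clm_smulRight (ℓ : E →L[ℝ] ℝ) (v : E) :
    LinearMap.trace ℝ E (ℓ.smulRight v : E →L[ℝ] E) = ℓ v :=
  LinearMap.trace_smulRight (ℓ : E →ₗ[ℝ] ℝ) v

lemma trace_fderiv_annularCutoff_smul {W : E → E} {z : E} (hW : DifferentiableAt ℝ W z) :
    LinearMap.trace ℝ E (fderiv ℝ (fun y => annularCutoff y • W y) z) =
      annularCutoff z * LinearMap.trace ℝ E (fderiv ℝ W z) +
        2 * deriv radialBump (‖z‖ ^ 2) * ⟪z, W z⟫_ℝ := by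
  rw [((hasFDerivAt_annularCutoff z).fun_smul hW.hasFDerivAt).fderiv,
    ContinuousLinearMap.toLinearMap_add, ContinuousLinearMap.toLinearMap_smul, map_add, map_smul,
    trace_clm_smulRight]
  simp only [smul_eq_mul, _root_.smul_apply, innerSL_apply_apply]
  ring

variable [MeasurableSpace E] [BorelSpace E] (μ : Measure E) [μ.IsAddHaarMeasure]

lemma integral_fderiv_apply_eq_zero {g : E → ℝ} (hg : ContDiff ℝ 1 g) (hsupp : HasCompactSupport g)
    (v : E) : ∫ z, fderiv ℝ g z v ∂μ = 0 := by
  have hparts := integral_mul_fderiv_eq_neg_fderiv_mul_of_integrable (μ := μ)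
    (f := fun _ => (1 : ℝ)) (g := g) (v := v) (by simp)
    (by simpa only [one_mul] using
      ((hg.continuous_fderiv one_ne_zero).clm_apply continuous_const
        ).integrable_of_hasCompactSupport (hsupp.fderiv_apply ℝ v))
    (by simpa only [one_mul] using hg.continuous.integrable_of_hasCompactSupport hsupp)
    (fun _ _ => differentiableAt_const _) fun z _ => hg.differentiable one_ne_zero z
  simpa using hparts

lemma integral_trace_fderiv_eq_zero {F : E → E} (hF : ContDiff ℝ 1 F)
    (hsupp : HasCompactSupport F) : ∫ z, LinearMap.trace ℝ E (fderiv ℝ F z) ∂μ = 0 := by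
  let b := stdOrthonormalBasis ℝ E
  have hcoord : ∀ i, ContDiff ℝ 1 fun z => ⟪b i, F z⟫_ℝ := fun i => contDiff_const.inner ℝ hF
  have hcoord_supp : ∀ i, HasCompactSupport fun z => ⟪b i, F z⟫_ℝ := fun i =>
    hsupp.comp_left (g := fun v => ⟪b i, v⟫_ℝ) (inner_zero_right _)
  have htrace : ∀ z, LinearMap.trace ℝ E (fderiv ℝ F z) =
      ∑ i, fderiv ℝ (fun z => ⟪b i, F z⟫_ℝ) z (b i) := by
    intro z
    rw [LinearMap.trace_eq_sum_inner _ b]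
    refine Finset.sum_congr rfl fun i _ => ?_
    rw [fderiv_inner_apply ℝ (differentiableAt_const _) (hF.differentiable one_ne_zero z)]
    simp
  simp_rw [htrace]
  rw [integral_finsetSum _ fun i _ => (((hcoord i).continuous_fderiv one_ne_zero).clm_apply
    continuous_const).integrable_of_hasCompactSupport ((hcoord_supp i).fderiv_apply ℝ (b i))]
  exact Finset.sum_eq_zero fun i _ => integral_fderiv_apply_eq_zero μ (hcoord i) (hcoord_supp i) _

variable [Nontrivial E]

variable (E) in
/-- The radial factor of an integral over `E` in polar coordinates. -/
def radialIntegral (q : ℝ → ℝ) : ℝ :=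
  ∫ r : Set.Ioi (0 : ℝ), q r ∂(Measure.volumeIoiPow (Module.finrank ℝ E - 1))

lemma integral_eq_mul_radialIntegral {f : E → ℝ} {p : sphere (0 : E) 1 → ℝ} {q : ℝ → ℝ}
    (h : ∀ x : sphere (0 : E) 1, ∀ r : ℝ, 0 < r → f (r • (x : E)) = p x * q r) :
    ∫ z, f z ∂μ = (∫ x, p x ∂μ.toSphere) * radialIntegral E q := by
  have hpolar := (μ.measurePreserving_homeomorphUnitSphereProd.symm
    (homeomorphUnitSphereProd E).toMeasurableEquiv).integral_comp'
      (fun z : ({0}ᶜ : Set E) => f z)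
  calc ∫ z, f z ∂μ = ∫ z in ({0}ᶜ : Set E), f z ∂μ := by rw [restrict_compl_singleton]
    _ = ∫ z : ({0}ᶜ : Set E), f z ∂(μ.comap (↑)) :=
      (integral_subtype_comap (measurableSet_singleton _).compl f).symm
    _ = ∫ p : sphere (0 : E) 1 × Set.Ioi (0 : ℝ), f ((p.2 : ℝ) • (p.1 : E))
          ∂(μ.toSphere.prod (Measure.volumeIoiPow _)) := hpolar.symm
    _ = _ := by
      simp_rw [fun z : sphere (0 : E) 1 × Set.Ioi (0 : ℝ) => h z.1 z.2 z.2.2]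
      exact integral_prod_mul (μ := μ.toSphere) p fun r : Set.Ioi (0 : ℝ) => q r

lemma radialIntegral_radialBump_ne_zero : radialIntegral E (fun r => radialBump (r ^ 2)) ≠ 0 := by
  let μ : Measure E := (stdOrthonormalBasis ℝ E).toBasis.addHaar
  obtain ⟨x, hx⟩ := exists_norm_eq E (Real.sqrt_nonneg (3 / 2))
  have hpos : 0 < ∫ z, annularCutoff z ∂μ := by
    refine continuous_annularCutoff.integral_pos_of_hasCompactSupport_nonneg_nonzero
      hasCompactSupport_annularCutoff (fun _ => radialBump.nonneg) (x := x) ?_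
    rw [annularCutoff, hx, Real.sq_sqrt (by norm_num),
      radialBump.one_of_mem_closedBall (mem_closedBall_self radialBump.rIn_pos.le)]
    exact one_ne_zero
  rw [integral_eq_mul_radialIntegral μ (p := fun _ => 1) fun x r hr => by
    rw [annularCutoff_smul x hr, one_mul]] at hpos
  exact right_ne_zero_of_mul hpos.ne'

variable {W : E → E}

lemma integral_trace_fderiv_mul_add_eq_zero (hW : ContDiffOn ℝ 1 W {0}ᶜ)
    (hom : ∀ r : ℝ, 0 < r → ∀ z, W (r • z) = r • W z) :
    (∫ x : sphere (0 : E) 1, LinearMap.trace ℝ E (fderiv ℝ W x) ∂μ.toSphere) *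
        radialIntegral E (fun r => radialBump (r ^ 2)) +
      (∫ x : sphere (0 : E) 1, ⟪(x : E), W x⟫_ℝ ∂μ.toSphere) *
        radialIntegral E (fun r => 2 * deriv radialBump (r ^ 2) * r ^ 2) = 0 := by
  let F : E → E := fun z => annularCutoff z • W z
  have hF : ContDiff ℝ 1 F := contDiff_annularCutoff_smul hW
  have hFsupp : HasCompactSupport F := hasCompactSupport_annularCutoff.smul_right
  let f : E → ℝ := fun z => annularCutoff z * LinearMap.trace ℝ E (fderiv ℝ W z)
  have hf : Integrable f μ :=
    (continuous_annularCutoff_mul (continuous_trace.comp_continuousOn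
      (hW.continuousOn_fderiv_of_isOpen isOpen_compl_singleton le_rfl))
      ).integrable_of_hasCompactSupport hasCompactSupport_annularCutoff.mul_right
  have htrF : Integrable (fun z => LinearMap.trace ℝ E (fderiv ℝ F z)) μ :=
    (continuous_trace.comp (hF.continuous_fderiv one_ne_zero)).integrable_of_hasCompactSupport
      ((hFsupp.fderiv ℝ).comp_left (g := fun T : E →L[ℝ] E => LinearMap.trace ℝ E T) (map_zero _))
  have hpolar₁ := integral_eq_mul_radialIntegral μ (f := f)
    (p := fun x => LinearMap.trace ℝ E (fderiv ℝ W x)) (q := fun r => radialBump (r ^ 2))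
    fun x r hr => by
      simp only [f]
      rw [annularCutoff_smul x hr, fderiv_smul_of_homogeneous hr (hom r hr), mul_comm]
  have hpolar₂ := integral_eq_mul_radialIntegral μ
    (f := fun z => LinearMap.trace ℝ E (fderiv ℝ F z) - f z) (p := fun x => ⟪(x : E), W x⟫_ℝ)
    (q := fun r => 2 * deriv radialBump (r ^ 2) * r ^ 2) fun x r hr => by
      have hrx : r • (x : E) ≠ 0 := smul_ne_zero hr.ne' (ne_zero_of_mem_unit_sphere x)
      rw [trace_fderiv_annularCutoff_smul ((hW.differentiableOn one_ne_zero).differentiableAt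
        (isOpen_compl_singleton.mem_nhds hrx)), add_sub_cancel_left, hom r hr, norm_smul,
        norm_eq_of_mem_sphere, mul_one, norm_of_nonneg hr.le, real_inner_smul_left,
        real_inner_smul_right]
      ring
  rw [← hpolar₁, ← hpolar₂, integral_sub htrF hf, integral_trace_fderiv_eq_zero μ hF hFsupp]
  ring

theorem integral_trace_fderiv_toSphere (hW : ContDiffOn ℝ 1 W {0}ᶜ)
    (hom : ∀ r : ℝ, 0 < r → ∀ z, W (r • z) = r • W z) :
    ∫ x : sphere (0 : E) 1, LinearMap.trace ℝ E (fderiv ℝ W x) ∂μ.toSphere =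
      Module.finrank ℝ E * ∫ x : sphere (0 : E) 1, ⟪(x : E), W x⟫_ℝ ∂μ.toSphere := by
  -- The identity field determines the ratio of the two radial integrals.
  have hid := integral_trace_fderiv_mul_add_eq_zero μ (W := id) contDiff_id.contDiffOn
    fun _ _ _ => rfl
  have hmass : μ.toSphere.real Set.univ ≠ 0 := by
    have : NeZero μ.toSphere := ⟨μ.toSphere_ne_zero⟩
    exact measureReal_univ_pos.ne'
  simp only [fderiv_id, id_eq, real_inner_self_eq_norm_sq, norm_eq_of_mem_sphere, one_pow,
    integral_const, smul_eq_mul, ContinuousLinearMap.coe_id, LinearMap.trace_id] at hid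
  have hratio : radialIntegral E (fun r => 2 * deriv radialBump (r ^ 2) * r ^ 2) =
      -(Module.finrank ℝ E * radialIntegral E (fun r => radialBump (r ^ 2))) :=
    mul_left_cancel₀ hmass (by linear_combination hid)
  have hW0 := integral_trace_fderiv_mul_add_eq_zero μ hW hom
  rw [hratio] at hW0
  exact mul_right_cancel₀ radialIntegral_radialBump_ne_zero (by linear_combination hW0)

end Divergence

variable {n : ℕ} {K : Set (Eu n)}

namespace IsSmoothConvexBody

lemma integral_mul_trace_add_norm_sq (hK : IsSmoothConvexBody K) (c : Eu n) :
    ∫ x : Sph n, (sfn K x * LinearMap.trace ℝ (Eu n) (hessA K x) +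
        ‖∇ (sfn K) (x : Eu n) - c‖ ^ 2) ∂sphMeas n =
      (n + 1) * ∫ x : Sph n, (sfn K x - ⟪(x : Eu n), c⟫_ℝ) ^ 2 ∂sphMeas n := by
  let W : Eu n → Eu n := fun z =>
    sfn K z • (∇ (sfn K) z - (2 : ℝ) • c) + ⟪c, z⟫_ℝ • c
  have hW : ContDiffOn ℝ 1 W {0}ᶜ := by
    intro z hz
    have hsfn := (hK.contDiffAt_sfn hz).of_le (m := 1) (by simp)
    have hgrad := (hK.contDiffAt_gradient_sfn hz).of_le (m := 1) (by norm_num)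
    exact ((hsfn.smul (hgrad.sub contDiffAt_const)).add
      ((contDiffAt_const.inner ℝ contDiffAt_id).smul contDiffAt_const)).contDiffWithinAt
  have hom : ∀ r : ℝ, 0 < r → ∀ z, W (r • z) = r • W z := by
    intro r hr z
    rcases eq_or_ne z 0 with rfl | hz
    · have hsfn0 : sfn K 0 = 0 := by simpa using sfn_smul K le_rfl (0 : Eu n)
      simp only [W, smul_zero, hsfn0, zero_smul, inner_zero_right, add_zero]
    simp only [W, sfn_smul K hr.le, hK.gradient_sfn_smul hr hz, real_inner_smul_right, smul_add,
      smul_smul]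
  have htrace : ∀ x : Sph n, LinearMap.trace ℝ (Eu n) (fderiv ℝ W x) =
      sfn K x * LinearMap.trace ℝ (Eu n) (hessA K x) + ‖∇ (sfn K) (x : Eu n) - c‖ ^ 2 := by
    intro x
    have hx := ne_zero_of_mem_unit_sphere x
    have hderiv := ((hK.hasGradientAt_sfn hx).hasFDerivAt.smul
      ((hK.hasFDerivAt_gradient_sfn hx).sub_const ((2 : ℝ) • c))).add
        ((innerSL ℝ c).hasFDerivAt.smul_const c)
    have hfderiv : fderiv ℝ W x = _ := hderiv.fderiv
    rw [hfderiv]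
    simp only [ContinuousLinearMap.toLinearMap_add, ContinuousLinearMap.toLinearMap_smul, map_add,
      map_smul, trace_clm_smulRight, smul_eq_mul, InnerProductSpace.toDual_apply_apply,
      innerSL_apply_apply, inner_sub_right, real_inner_smul_right, norm_sub_sq_real,
      real_inner_self_eq_norm_sq]
    ring
  have hinner : ∀ x : Sph n, ⟪(x : Eu n), W x⟫_ℝ = (sfn K x - ⟪(x : Eu n), c⟫_ℝ) ^ 2 := by
    intro x
    simp only [W, inner_add_right, real_inner_smul_right, inner_sub_right,
      hK.inner_gradient_sfn_self (ne_zero_of_mem_unit_sphere x), real_inner_comm c]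
    ring
  have hdiv := integral_trace_fderiv_toSphere volume hW hom
  simpa [htrace, hinner, sphMeas] using hdiv

end IsSmoothConvexBody

/-! ### Bodies of nearly constant density -/

section NearConstantDensity

variable {n : ℕ} {K : Set (Eu n)} {ε R : ℝ}

lemma integral_sphMeas_mono {f g : Sph n → ℝ} (hf : Continuous f) (hg : Continuous g)
    (h : ∀ x, f x ≤ g x) : ∫ x, f x ∂sphMeas n ≤ ∫ x, g x ∂sphMeas n :=
  integral_mono (integrable_sphMeas hf) (integrable_sphMeas hg) h

namespace IsSmoothConvexBody

lemma inner_gradient_sfn_sub_cK_self (hK : IsSmoothConvexBody K) (x : Sph n) :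
    ⟪(x : Eu n), ∇ (sfn K) (x : Eu n) - cK K⟫_ℝ = tsfn K x := by
  rw [inner_sub_right, hK.inner_gradient_sfn_self (ne_zero_of_mem_unit_sphere x), tsfn]

lemma inner_gradient_sfn_sub_cK_le (hK : IsSmoothConvexBody K) (x : Sph n) (w : Eu n) :
    ⟪w, ∇ (sfn K) (x : Eu n) - cK K⟫_ℝ ≤ tsfn K w := by
  rw [inner_sub_right, tsfn]
  exact sub_le_sub_right (hK.inner_gradient_sfn_le (ne_zero_of_mem_unit_sphere x) w) _

lemma abs_tsfn_le_norm (hK : IsSmoothConvexBody K) (x : Sph n) :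
    |tsfn K x| ≤ ‖∇ (sfn K) (x : Eu n) - cK K‖ := by
  rw [← hK.inner_gradient_sfn_sub_cK_self]
  simpa only [norm_eq_of_mem_sphere, one_mul] using
    abs_real_inner_le_norm (x : Eu n) (∇ (sfn K) (x : Eu n) - cK K)

lemma continuous_tsfn (hK : IsSmoothConvexBody K) : Continuous fun x : Sph n => tsfn K x :=
  hK.continuous_sfn.sub (continuous_subtype_val.inner continuous_const)

lemma norm_gradient_sfn_le (hK : IsSmoothConvexBody K) (hR : ∀ y ∈ K, ‖y‖ ≤ R) (x : Sph n) :
    ‖∇ (sfn K) (x : Eu n)‖ ≤ R :=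
  hR _ (hK.gradient_sfn_mem (ne_zero_of_mem_unit_sphere x))

lemma norm_cK_le (hK : IsSmoothConvexBody K) (hR : ∀ y ∈ K, ‖y‖ ≤ R) : ‖cK K‖ ≤ R := by
  have hV := hK.integral_dens_pos
  rw [cK, norm_smul, norm_inv, norm_of_nonneg hV.le, inv_mul_le_iff₀ hV, ← integral_mul_const]
  refine norm_integral_le_of_norm_le
    (integrable_sphMeas (hK.continuous_dens.mul continuous_const)) (ae_of_all _ fun x => ?_)
  rw [norm_smul, norm_of_nonneg (hK.dens_pos x).le]
  exact mul_le_mul_of_nonneg_left (hK.norm_gradient_sfn_le hR x) (hK.dens_pos x).le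

lemma norm_gradient_sfn_sub_cK_le (hK : IsSmoothConvexBody K) (hR : ∀ y ∈ K, ‖y‖ ≤ R)
    (x : Sph n) : ‖∇ (sfn K) (x : Eu n) - cK K‖ ≤ 2 * R := by
  linarith [norm_sub_le (∇ (sfn K) (x : Eu n)) (cK K), hK.norm_gradient_sfn_le hR x,
    hK.norm_cK_le hR]

lemma inner_hessA_apply_nonneg (hK : IsSmoothConvexBody K) (x : Sph n) (v : Eu n) :
    0 ≤ ⟪hessA K x v, v⟫_ℝ := by
  by_cases hv : ∃ c : ℝ, v = c • (x : Eu n)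
  · obtain ⟨c, rfl⟩ := hv
    rw [map_smul, hK.hessA_apply_self (ne_zero_of_mem_unit_sphere x), smul_zero, inner_zero_left]
  · exact (hK.inner_hessA_apply_pos x (not_exists.1 hv)).le

lemma trace_hessA_nonneg (hK : IsSmoothConvexBody K) (x : Sph n) :
    0 ≤ LinearMap.trace ℝ (Eu n) (hessA K x) := by
  rw [LinearMap.trace_eq_sum_inner _ (EuclideanSpace.basisFun (Fin (n + 1)) ℝ)]
  refine Finset.sum_nonneg fun i _ => ?_
  rw [real_inner_comm]
  exact hK.inner_hessA_apply_nonneg x _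

lemma continuous_trace_hessA (hK : IsSmoothConvexBody K) :
    Continuous fun x : Sph n => LinearMap.trace ℝ (Eu n) (hessA K x) :=
  continuous_trace.comp hK.continuous_hessA

lemma mul_one_sub_mul_integral_norm_sq_le (hK : IsSmoothConvexBody K)
    (hd : ∀ x : Sph n, 1 - ε ≤ dens K x ∧ dens K x ≤ 1 + ε) :
    n * ((1 - ε) * ∫ x : Sph n, ‖∇ (sfn K) (x : Eu n) - cK K‖ ^ 2 ∂sphMeas n) ≤
      (1 + ε) * ∫ x : Sph n, sfn K x * LinearMap.trace ℝ (Eu n) (hessA K x) ∂sphMeas n := by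
  have hdens := hK.continuous_dens
  have hh := hK.continuous_sfn
  have hX := hK.continuous_gradient_sfn
  have htr := hK.continuous_trace_hessA
  rw [← integral_const_mul (1 - ε), ← integral_const_mul (1 + ε)]
  calc _ ≤ n * ∫ x : Sph n, dens K x * ‖∇ (sfn K) (x : Eu n) - cK K‖ ^ 2 ∂sphMeas n :=
        mul_le_mul_of_nonneg_left (integral_sphMeas_mono (by fun_prop) (by fun_prop) fun x =>
          mul_le_mul_of_nonneg_right (hd x).1 (sq_nonneg _)) n.cast_nonneg
    _ ≤ ∫ x : Sph n, dens K x * (sfn K x * LinearMap.trace ℝ (Eu n) (hessA K x)) ∂sphMeas n :=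
        hK.mul_integral_dens_mul_norm_sq_le
    _ ≤ _ := integral_sphMeas_mono (by fun_prop) (by fun_prop) fun x =>
        mul_le_mul_of_nonneg_right (hd x).2 (mul_nonneg (hK.pos x).le (hK.trace_hessA_nonneg x))

lemma integral_norm_sq_sub_tsfn_sq_le (hK : IsSmoothConvexBody K)
    (hd : ∀ x : Sph n, 1 - ε ≤ dens K x ∧ dens K x ≤ 1 + ε) :
    ∫ x : Sph n, (‖∇ (sfn K) (x : Eu n) - cK K‖ ^ 2 - tsfn K x ^ 2) ∂sphMeas n ≤
      2 * ε * ∫ x : Sph n, ‖∇ (sfn K) (x : Eu n) - cK K‖ ^ 2 ∂sphMeas n := by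
  have hh := hK.continuous_sfn
  have hX := hK.continuous_gradient_sfn
  have ht := hK.continuous_tsfn
  have htr := hK.continuous_trace_hessA
  have hε : 0 ≤ ε := by linarith [hd (Classical.arbitrary _)]
  have hspec := hK.mul_one_sub_mul_integral_norm_sq_le hd
  have hdiv : _ = (n + 1) * ∫ x : Sph n, tsfn K x ^ 2 ∂sphMeas n :=
    hK.integral_mul_trace_add_norm_sq (cK K)
  rw [integral_add (integrable_sphMeas (by fun_prop)) (integrable_sphMeas (by fun_prop))] at hdiv
  have htsfn : ∫ x : Sph n, tsfn K x ^ 2 ∂sphMeas n ≤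
      ∫ x : Sph n, ‖∇ (sfn K) (x : Eu n) - cK K‖ ^ 2 ∂sphMeas n :=
    integral_sphMeas_mono (by fun_prop) (by fun_prop) fun x =>
      sq_le_sq.2 ((hK.abs_tsfn_le_norm x).trans (le_abs_self _))
  rw [integral_sub (integrable_sphMeas (by fun_prop)) (integrable_sphMeas (by fun_prop))]
  set P := ∫ x : Sph n, ‖∇ (sfn K) (x : Eu n) - cK K‖ ^ 2 ∂sphMeas n
  set Q := ∫ x : Sph n, tsfn K x ^ 2 ∂sphMeas n
  have hP : 0 ≤ P := integral_nonneg fun _ => by positivity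
  have hgap : (n + 1) * (P - Q) ≤ ε * ((n - 1) * P + (n + 1) * Q) := by
    linear_combination hspec + (1 + ε) * hdiv
  have hbound : ε * ((n - 1) * P + (n + 1) * Q) ≤ (n + 1) * (2 * ε * P) := by
    linear_combination ε * (n + 1) * htsfn + 2 * ε * hP
  exact le_of_mul_le_mul_left (hgap.trans hbound) (by positivity)

lemma integral_norm_sq_sub_tsfn_sq_le_measureReal (hK : IsSmoothConvexBody K)
    (hd : ∀ x : Sph n, 1 - ε ≤ dens K x ∧ dens K x ≤ 1 + ε) (hR : ∀ y ∈ K, ‖y‖ ≤ R) :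
    ∫ x : Sph n, (‖∇ (sfn K) (x : Eu n) - cK K‖ ^ 2 - tsfn K x ^ 2) ∂sphMeas n ≤
      8 * ε * R ^ 2 * (sphMeas n).real Set.univ := by
  have hX := hK.continuous_gradient_sfn
  have hε : 0 ≤ ε := by linarith [hd (Classical.arbitrary _)]
  calc _ ≤ 2 * ε * ∫ x : Sph n, ‖∇ (sfn K) (x : Eu n) - cK K‖ ^ 2 ∂sphMeas n :=
        hK.integral_norm_sq_sub_tsfn_sq_le hd
    _ ≤ 2 * ε * ∫ _ : Sph n, (2 * R) ^ 2 ∂sphMeas n := by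
        refine mul_le_mul_of_nonneg_left (integral_sphMeas_mono (by fun_prop)
          continuous_const fun x => ?_) (by positivity)
        exact pow_le_pow_left₀ (norm_nonneg _) (hK.norm_gradient_sfn_sub_cK_le hR x) 2
    _ = 8 * ε * R ^ 2 * (sphMeas n).real Set.univ := by
        rw [integral_const, smul_eq_mul]
        ring

end IsSmoothConvexBody

end NearConstantDensity

/-! ### Lower bound for the translated support function -/

lemma exists_mem_le_of_integral_lt {α : Type*} [MeasurableSpace α] {μ : Measure α}
    [IsFiniteMeasure μ] {f : α → ℝ} {s : Set α} {t : ℝ} (hf : Integrable f μ) (hf0 : ∀ x, 0 ≤ f x)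
    (ht : 0 ≤ t) (h : ∫ x, f x ∂μ < t * μ.real s) : ∃ x ∈ s, f x ≤ t := by
  by_contra! hs
  have hsub : s ⊆ {x | t ≤ f x} := fun x hx => (hs x hx).le
  exact h.not_ge ((mul_le_mul_of_nonneg_left (measureReal_mono hsub) ht).trans
    (mul_meas_ge_le_integral_of_nonneg (ae_of_all _ hf0) hf t))

lemma exists_mul_measureReal_univ_le_ball (n : ℕ) {ρ : ℝ} (hρ : 0 < ρ) : ∃ κ : ℝ, 0 < κ ∧
    ∀ z : Sph n, κ * (sphMeas n).real Set.univ ≤ (sphMeas n).real (ball z ρ) := by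
  have hb := Measure.toSphereBallBound_pos (n + 1) ρ
  refine ⟨Measure.toSphereBallBound (n + 1) ρ / (n + 1), by positivity, fun z => ?_⟩
  have hball := Measure.toSphereBallBound_mul_measureReal_unitBall_le_toSphere_ball
    (volume : Measure (Eu n)) hρ z
  rw [finrank_euclideanSpace_fin] at hball
  refine le_of_eq_of_le ?_ hball
  rw [sphMeas, Measure.toSphere_real_apply_univ, finrank_euclideanSpace_fin]
  push_cast
  field_simp

section SphereGeometry

variable {E : Type*} [NormedAddCommGroup E] [InnerProductSpace ℝ E]

lemma exists_sphere_inner_eq_zero (hE : 1 < Module.finrank ℝ E) (z : E) :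
    ∃ u : sphere (0 : E) 1, ⟪z, (u : E)⟫_ℝ = 0 := by
  have : FiniteDimensional ℝ E := .of_finrank_pos (zero_lt_one.trans hE)
  have hspan : (Submodule.span ℝ {z})ᗮ ≠ ⊥ := fun h => by
    rw [Submodule.orthogonal_eq_bot_iff] at h
    have hcard := finrank_span_le_card (R := ℝ) ({z} : Set E)
    rw [h, finrank_top, Set.toFinset_singleton, Finset.card_singleton] at hcard
    exact hE.not_ge hcard
  obtain ⟨v, hv, hv0⟩ := Submodule.exists_mem_ne_zero_of_ne_bot hspan
  obtain ⟨u, hu⟩ := exists_norm_smul_sphere_eq hv0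
  rw [Submodule.mem_orthogonal_singleton_iff_inner_right, ← hu, real_inner_smul_right] at hv
  exact ⟨u, (mul_eq_zero.1 hv).resolve_left (norm_ne_zero_iff.2 hv0)⟩

lemma exists_sphere_inner_eq_inner {z y : sphere (0 : E) 1} (hzy : 0 ≤ ⟪(z : E), (y : E)⟫_ℝ) :
    ∃ w : sphere (0 : E) 1, ⟪(z : E), (w : E)⟫_ℝ = ⟪(w : E), (y : E)⟫_ℝ ∧
      0 ≤ ⟪(w : E), (y : E)⟫_ℝ ∧ 1 / 2 ≤ ⟪(w : E), (y : E)⟫_ℝ ^ 2 := by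
  have hnorm : ‖(z : E) + y‖ ^ 2 = 2 * (1 + ⟪(z : E), (y : E)⟫_ℝ) := by
    rw [norm_add_sq_real, norm_eq_of_mem_sphere, norm_eq_of_mem_sphere]
    ring
  have hpos : 0 < ‖(z : E) + y‖ := (sq_pos_iff.1 (by linarith)).lt_of_le' (norm_nonneg _)
  obtain ⟨w, hw⟩ := exists_norm_smul_sphere_eq (norm_pos_iff.1 hpos)
  have hzw : ⟪(z : E), (w : E)⟫_ℝ = ‖(z : E) + y‖ / 2 := by
    refine mul_left_cancel₀ hpos.ne' ?_
    rw [← real_inner_smul_right, hw, inner_add_right, real_inner_self_eq_norm_sq,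
      norm_eq_of_mem_sphere]
    linear_combination -hnorm / 2
  have hwy : ⟪(w : E), (y : E)⟫_ℝ = ‖(z : E) + y‖ / 2 := by
    refine mul_left_cancel₀ hpos.ne' ?_
    rw [← real_inner_smul_left, hw, inner_add_left, real_inner_self_eq_norm_sq,
      norm_eq_of_mem_sphere]
    linear_combination -hnorm / 2
  exact ⟨w, hzw.trans hwy.symm, by rw [hwy]; positivity, by rw [hwy, div_pow]; linarith⟩

variable {F : sphere (0 : E) 1 → ℝ} {a η : ℝ}

lemma half_sub_le_of_mul_inner_sub_le (hη : 0 ≤ η) (ha : 0 ≤ a)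
    (hF : ∀ y z : sphere (0 : E) 1, F z * ⟪(z : E), (y : E)⟫_ℝ - η ≤ F y) {y z : sphere (0 : E) 1}
    (hzy : 0 ≤ ⟪(z : E), (y : E)⟫_ℝ) (hz : a ≤ F z) : a / 2 - 2 * η ≤ F y := by
  obtain ⟨w, hzw, hw0, hw2⟩ := exists_sphere_inner_eq_inner hzy
  have hle : ⟪(w : E), (y : E)⟫_ℝ ≤ 1 := by
    simpa only [norm_eq_of_mem_sphere, one_mul] using real_inner_le_norm (w : E) (y : E)
  have hFw := hF w z
  rw [hzw] at hFw
  set k := ⟪(w : E), (y : E)⟫_ℝ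
  calc a / 2 - 2 * η ≤ a * k ^ 2 - η * k - η := by
        linear_combination a * hw2 + η * hle
    _ ≤ (F z * k - η) * k - η := by
        linear_combination k ^ 2 * hz
    _ ≤ F w * k - η := by gcongr
    _ ≤ F y := hF y w

lemma quarter_sub_le_of_mul_inner_sub_le (hE : 1 < Module.finrank ℝ E) (hη : 0 ≤ η)
    (ha : 4 * η ≤ a)
    (hF : ∀ y z : sphere (0 : E) 1, F z * ⟪(z : E), (y : E)⟫_ℝ - η ≤ F y) {z : sphere (0 : E) 1}
    (hz : a ≤ F z) (y : sphere (0 : E) 1) : a / 4 - 3 * η ≤ F y := by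
  obtain ⟨u, hzu, huy⟩ : ∃ u : sphere (0 : E) 1,
      ⟪(z : E), (u : E)⟫_ℝ = 0 ∧ 0 ≤ ⟪(u : E), (y : E)⟫_ℝ := by
    obtain ⟨u, hu⟩ := exists_sphere_inner_eq_zero hE (z : E)
    rcases le_total 0 ⟪(u : E), (y : E)⟫_ℝ with h | h
    · exact ⟨u, hu, h⟩
    · exact ⟨-u, by simpa using hu, by simpa using h⟩
  have hFu := half_sub_le_of_mul_inner_sub_le hη (by linarith) hF hzu.ge hz
  linarith [half_sub_le_of_mul_inner_sub_le hη (by linarith) hF huy hFu]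

end SphereGeometry

variable {n : ℕ} {K : Set (Eu n)} {ε κ r R : ℝ}

namespace IsSmoothConvexBody

lemma sfn_le (hK : IsSmoothConvexBody K) (hR : ∀ y ∈ K, ‖y‖ ≤ R) (x : Sph n) : sfn K x ≤ R := by
  obtain ⟨y, hy, hxy⟩ := exists_inner_eq_sfn hK.compact hK.nonempty x
  have hnorm := real_inner_le_norm (x : Eu n) y
  rw [norm_eq_of_mem_sphere, one_mul, hxy] at hnorm
  exact hnorm.trans (hR y hy)

lemma exists_half_norm_le_tsfn (hK : IsSmoothConvexBody K) {y : Eu n} (hy : y ∈ K) :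
    ∃ z : Sph n, ‖y‖ / 2 ≤ tsfn K z := by
  obtain ⟨x, hx⟩ : ∃ x : Sph n, ‖y‖ ≤ sfn K x := by
    rcases eq_or_ne y 0 with rfl | hy0
    · exact ⟨Classical.arbitrary _, by simpa using (hK.pos _).le⟩
    obtain ⟨x, hx⟩ := exists_norm_smul_sphere_eq hy0
    refine ⟨x, (inner_le_sfn hK.compact hy x).trans' (le_of_eq ?_)⟩
    nth_rw 2 [← hx]
    rw [real_inner_smul_right, real_inner_self_eq_norm_sq, norm_eq_of_mem_sphere, one_pow, mul_one]
  have hneg : 0 < sfn K (-(x : Eu n)) := hK.pos (-x)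
  by_contra! h
  have hx' := h x
  have hneg' := h (-x)
  rw [coe_neg_sphere, tsfn, inner_neg_left] at hneg'
  rw [tsfn] at hx'
  linarith

lemma abs_tsfn_sub_tsfn_le (hK : IsSmoothConvexBody K) (hR : ∀ y ∈ K, ‖y‖ ≤ R) (x z : Sph n) :
    |tsfn K x - tsfn K z| ≤ 2 * R * dist x z := by
  have hle : ∀ x z : Sph n, tsfn K x - tsfn K z ≤ 2 * R * dist x z := fun x z => by
    calc tsfn K x - tsfn K z
        ≤ ⟪(x : Eu n), ∇ (sfn K) (x : Eu n) - cK K⟫_ℝ -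
            ⟪(z : Eu n), ∇ (sfn K) (x : Eu n) - cK K⟫_ℝ :=
          sub_le_sub (hK.inner_gradient_sfn_sub_cK_self x).ge (hK.inner_gradient_sfn_sub_cK_le x z)
      _ = ⟪(x : Eu n) - z, ∇ (sfn K) (x : Eu n) - cK K⟫_ℝ := (inner_sub_left _ _ _).symm
      _ ≤ ‖(x : Eu n) - z‖ * ‖∇ (sfn K) (x : Eu n) - cK K‖ := real_inner_le_norm _ _
      _ ≤ ‖(x : Eu n) - z‖ * (2 * R) := by
          gcongr
          exact hK.norm_gradient_sfn_sub_cK_le hR x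
      _ = 2 * R * dist x z := by rw [Subtype.dist_eq, dist_eq_norm, mul_comm]
  exact abs_sub_le_iff.2 ⟨hle x z, dist_comm x z ▸ hle z x⟩

lemma norm_sub_tsfn_smul_sq (hK : IsSmoothConvexBody K) (x : Sph n) :
    ‖∇ (sfn K) (x : Eu n) - cK K - tsfn K x • (x : Eu n)‖ ^ 2 =
      ‖∇ (sfn K) (x : Eu n) - cK K‖ ^ 2 - tsfn K x ^ 2 := by
  rw [norm_sub_sq_real, real_inner_smul_right, real_inner_comm,
    hK.inner_gradient_sfn_sub_cK_self, norm_smul, norm_eq_of_mem_sphere, mul_one, norm_eq_abs,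
    sq_abs]
  ring

lemma norm_sub_tsfn_smul_le (hK : IsSmoothConvexBody K) (hR : ∀ y ∈ K, ‖y‖ ≤ R) (x z : Sph n) :
    ‖∇ (sfn K) (x : Eu n) - cK K - tsfn K z • (z : Eu n)‖ ≤
      ‖∇ (sfn K) (x : Eu n) - cK K - tsfn K x • (x : Eu n)‖ + 4 * R * dist x z := by
  have hmove : ‖tsfn K x • ((x : Eu n) - z)‖ ≤ 2 * R * dist x z := by
    rw [norm_smul, norm_eq_abs, ← dist_eq_norm, ← Subtype.dist_eq]
    gcongr
    exact (hK.abs_tsfn_le_norm x).trans (hK.norm_gradient_sfn_sub_cK_le hR x)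
  have hlip : ‖(tsfn K x - tsfn K z) • (z : Eu n)‖ ≤ 2 * R * dist x z := by
    rw [norm_smul, norm_eq_of_mem_sphere, mul_one, norm_eq_abs]
    exact hK.abs_tsfn_sub_tsfn_le hR x z
  have hsplit : ∇ (sfn K) (x : Eu n) - cK K - tsfn K z • (z : Eu n) =
      ∇ (sfn K) (x : Eu n) - cK K - tsfn K x • (x : Eu n) + tsfn K x • ((x : Eu n) - z) +
        (tsfn K x - tsfn K z) • (z : Eu n) := by
    module
  rw [hsplit]
  linarith [norm_add₃_le (a := ∇ (sfn K) (x : Eu n) - cK K - tsfn K x • (x : Eu n))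
    (b := tsfn K x • ((x : Eu n) - z)) (c := (tsfn K x - tsfn K z) • (z : Eu n))]

lemma tsfn_mul_inner_sub_norm_le (hK : IsSmoothConvexBody K) (x y z : Sph n) :
    tsfn K z * ⟪(z : Eu n), (y : Eu n)⟫_ℝ -
      ‖∇ (sfn K) (x : Eu n) - cK K - tsfn K z • (z : Eu n)‖ ≤ tsfn K y := by
  have hcs := neg_le_of_abs_le (abs_real_inner_le_norm (y : Eu n)
    (∇ (sfn K) (x : Eu n) - cK K - tsfn K z • (z : Eu n)))
  rw [norm_eq_of_mem_sphere, one_mul, inner_sub_right, real_inner_smul_right,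
    real_inner_comm (z : Eu n)] at hcs
  linarith [hK.inner_gradient_sfn_sub_cK_le x y]

lemma exists_dist_lt_norm_sub_tsfn_smul_le (hK : IsSmoothConvexBody K)
    (hd : ∀ x : Sph n, 1 - ε ≤ dens K x ∧ dens K x ≤ 1 + ε) (hR0 : 0 < R)
    (hR : ∀ y ∈ K, ‖y‖ ≤ R) {δ ρ : ℝ} (hδ : 0 ≤ δ) {z : Sph n}
    (hball : κ * (sphMeas n).real Set.univ ≤ (sphMeas n).real (ball z ρ))
    (hε : 8 * ε < δ ^ 2 * κ) : ∃ x : Sph n, dist x z < ρ ∧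
      ‖∇ (sfn K) (x : Eu n) - cK K - tsfn K x • (x : Eu n)‖ ≤ δ * R := by
  have hX := hK.continuous_gradient_sfn
  have ht := hK.continuous_tsfn
  have huniv : 0 < (sphMeas n).real Set.univ := measureReal_univ_pos
  obtain ⟨x, hx, hle⟩ := exists_mem_le_of_integral_lt (μ := sphMeas n) (s := ball z ρ)
    (f := fun x : Sph n => ‖∇ (sfn K) (x : Eu n) - cK K‖ ^ 2 - tsfn K x ^ 2)
    (integrable_sphMeas (by fun_prop))
    (fun x => hK.norm_sub_tsfn_smul_sq x ▸ sq_nonneg _)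
    (sq_nonneg (δ * R)) <| by
      calc ∫ x : Sph n, (‖∇ (sfn K) (x : Eu n) - cK K‖ ^ 2 - tsfn K x ^ 2) ∂sphMeas n
          ≤ 8 * ε * R ^ 2 * (sphMeas n).real Set.univ :=
            hK.integral_norm_sq_sub_tsfn_sq_le_measureReal hd hR
        _ < δ ^ 2 * κ * R ^ 2 * (sphMeas n).real Set.univ := by gcongr
        _ = (δ * R) ^ 2 * (κ * (sphMeas n).real Set.univ) := by ring
        _ ≤ (δ * R) ^ 2 * (sphMeas n).real (ball z ρ) := by gcongr
  rw [← hK.norm_sub_tsfn_smul_sq] at hle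
  exact ⟨x, hx, le_of_sq_le_sq hle (by positivity)⟩

lemma tsfn_mul_inner_sub_le (hK : IsSmoothConvexBody K)
    (hd : ∀ x : Sph n, 1 - ε ≤ dens K x ∧ dens K x ≤ 1 + ε) (hR0 : 0 < R)
    (hR : ∀ y ∈ K, ‖y‖ ≤ R) {δ ρ : ℝ} (hδ : 0 ≤ δ)
    (hball : ∀ z : Sph n, κ * (sphMeas n).real Set.univ ≤ (sphMeas n).real (ball z ρ))
    (hε : 8 * ε < δ ^ 2 * κ) (y z : Sph n) :
    tsfn K z * ⟪(z : Eu n), (y : Eu n)⟫_ℝ - (δ + 4 * ρ) * R ≤ tsfn K y := by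
  obtain ⟨x, hxz, hx⟩ := hK.exists_dist_lt_norm_sub_tsfn_smul_le hd hR0 hR hδ (hball z) hε
  have hdist : R * dist x z ≤ R * ρ := by gcongr
  linarith [hK.tsfn_mul_inner_sub_norm_le x y z, hK.norm_sub_tsfn_smul_le hR x z]

lemma le_two_of_le_tsfn (hK : IsSmoothConvexBody K) (hd : ∀ x : Sph n, dens K x ≤ 2)
    (hr : ∀ x : Sph n, r ≤ tsfn K x) : r ≤ 2 := by
  by_contra! h2
  have huniv : 0 < (sphMeas n).real Set.univ := measureReal_univ_pos
  have hint : ∫ x : Sph n, dens K x ∂sphMeas n ≤ 2 * (sphMeas n).real Set.univ := by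
    refine (integral_sphMeas_mono hK.continuous_dens continuous_const hd).trans_eq ?_
    rw [integral_const, smul_eq_mul, mul_comm]
  have hpow := le_of_mul_le_mul_right
    ((hK.pow_mul_measureReal_sphere_le (by linarith) hr).trans hint) huniv
  have hr1 : r ≤ r ^ (n + 1) := le_self_pow₀ (by linarith) n.succ_ne_zero
  linarith

end IsSmoothConvexBody

end

/-- There exist `ε₀ > 0` and `C > 0`, depending only on `n`, such that if `K` is a smooth,
strictly convex body containing the origin in its interior with
`1 − ε ≤ h·det(A+x⊗x) ≤ 1 + ε` on `S^n` for some `ε ∈ (0, ε₀)`, then `h ≤ C` on `S^n`. -/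
theorem support_bounded_of_near_constant_density (n : ℕ) (hn : 1 ≤ n) :
    ∃ ε₀ C : ℝ, 0 < ε₀ ∧ 0 < C ∧
      ∀ K : Set (Eu n), IsSmoothConvexBody K → (0 : Eu n) ∈ interior K →
        ∀ ε : ℝ, ε ∈ Set.Ioo 0 ε₀ →
          (∀ x : Sph n, 1 - ε ≤ dens K (x : Eu n) ∧ dens K (x : Eu n) ≤ 1 + ε) →
          ∀ x : Sph n, sfn K (x : Eu n) ≤ C := by
  obtain ⟨κ, hκ, hball⟩ :=
    exists_mul_measureReal_univ_le_ball n (ρ := 1 / 256) (by norm_num)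
  refine ⟨min 1 ((1 / 64) ^ 2 * κ / 8), 64, by positivity, by norm_num, ?_⟩
  rintro K hK - ε ⟨-, hε⟩ hd x
  obtain ⟨hε1, hεκ⟩ := lt_min_iff.1 hε
  obtain ⟨y₀, hy₀, hmax⟩ := hK.compact.exists_isMaxOn hK.nonempty continuous_norm.continuousOn
  have hR : ∀ y ∈ K, ‖y‖ ≤ ‖y₀‖ := hmax
  have hR0 : 0 < ‖y₀‖ := (hK.pos x).trans_le (hK.sfn_le hR x)
  have htilt := hK.tsfn_mul_inner_sub_le hd hR0 hR (δ := 1 / 64) (by norm_num) hball (by linarith)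
  obtain ⟨z, hz⟩ := hK.exists_half_norm_le_tsfn hy₀
  have hlower := quarter_sub_le_of_mul_inner_sub_le (F := fun x : Sph n => tsfn K x)
    (by rw [finrank_euclideanSpace_fin]; lia) (by positivity) (by linarith) htilt hz
  have hr := hK.le_two_of_le_tsfn (fun x => (hd x).2.trans (by linarith)) hlower
  linarith [hK.sfn_le hR x]
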